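/- arXiv:1508.06199 — 3 statements merged into one kernel-verified Lean document; each statement's English description precedes it below -/
import Mathlib

section
/- Let λ ∈ ℂ with 0 < Im λ < ρ and let f : (0,∞) → ℂ be measurable with ∫₀^∞ |f(s)| Δ(s) ds < ∞. Define the spherical transform f̂(μ) = ∫₀^∞ f(s) φ_μ(s) Δ(s) ds for μ ∈ ℂ with |Im μ| ≤ ρ. Then for every ξ ∈ ℝ, the integral ∫₀^∞ T_λf(t) φ_ξ(t) Δ(t) dt converges absolutely and equals (f̂(λ) − f̂(ξ))/(ξ² − λ²). -/
open Complex MeasureTheory Set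

noncomputable section

/-- Gauss hypergeometric function ₂F₁ as a power series sum. -/
def hyp (a b c x : ℂ) : ℂ :=
  ∑' n : ℕ, (ascPochhammer ℂ n).eval a * (ascPochhammer ℂ n).eval b /
    ((ascPochhammer ℂ n).eval c * (n.factorial : ℂ)) * x ^ n

/-- ρ = (m₁ + 2 m₂)/2 -/
def rho (m₁ m₂ : ℕ) : ℝ := ((m₁ : ℝ) + 2 * m₂) / 2

/-- Δ(t) = (2 sinh t)^(m₁+m₂) (2 cosh t)^(m₂) -/
def Del (m₁ m₂ : ℕ) (t : ℝ) : ℝ :=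
  (2 * Real.sinh t) ^ (m₁ + m₂) * (2 * Real.cosh t) ^ m₂

/-- The solution Φ_λ. -/
def Phi (m₁ m₂ : ℕ) (l : ℂ) (t : ℝ) : ℂ :=
  ((2 * Real.cosh t : ℝ) : ℂ) ^ (Complex.I * l - (rho m₁ m₂ : ℂ)) *
    hyp (((rho m₁ m₂ : ℂ) - Complex.I * l) / 2) (((m₁ : ℂ) + 2) / 4 - Complex.I * l / 2)
      (1 - Complex.I * l) ((((Real.cosh t) ^ 2 : ℝ) : ℂ))⁻¹

/-- The function b_λ. -/
def bfun (m₁ m₂ : ℕ) (l : ℂ) (t : ℝ) : ℂ :=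
  (2 : ℂ) ^ (-(rho m₁ m₂ : ℂ) - 1 - Complex.I * l) *
    (Complex.Gamma (((rho m₁ m₂ : ℂ) - Complex.I * l) / 2) *
      Complex.Gamma (((m₁ : ℂ) + 2) / 4 - Complex.I * l / 2) /
      (Complex.Gamma (((m₁ : ℂ) + (m₂ : ℂ) + 1) / 2) * Complex.Gamma (1 - Complex.I * l))) *
    Phi m₁ m₂ l t

/-- The elementary spherical function φ_λ. -/
def sph (m₁ m₂ : ℕ) (l : ℂ) (t : ℝ) : ℂ :=
  ((Real.cosh t : ℝ) : ℂ) ^ (-((rho m₁ m₂ : ℂ) + Complex.I * l)) *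
    hyp (((m₁ : ℂ) + 2) / 4 + Complex.I * l / 2) (((rho m₁ m₂ : ℂ) + Complex.I * l) / 2)
      (((m₁ : ℂ) + (m₂ : ℂ) + 1) / 2) (((Real.tanh t) ^ 2 : ℝ) : ℂ)

/-- The operator T_λ. -/
def Tfun (m₁ m₂ : ℕ) (l : ℂ) (f : ℝ → ℂ) (t : ℝ) : ℂ :=
  bfun m₁ m₂ l t * (∫ s in Set.Ioi t, f s * sph m₁ m₂ l s * (Del m₁ m₂ s : ℂ)) -
    sph m₁ m₂ l t * (∫ s in Set.Ioi t, f s * bfun m₁ m₂ l s * (Del m₁ m₂ s : ℂ))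

/-!
Both `sph` and `bfun` solve the radial Sturm–Liouville equation `(Del u')' = -(l² + ρ²) Del u`:
the substitution `x = tanh² t` turns it into Gauss's hypergeometric equation, at `x = 0` for `sph`
and at `x = 1` for `bfun`. The Gamma factors in `bfun` normalise the Wronskian of the pair to `1`,
so `Tfun` is the Volterra operator with the kernel `b(t) φ(s) - φ(t) b(s)`, which inverts
`L + l² + ρ²` for `L u = Del⁻¹ (Del u')'`. Integrating the kernel against `sph m₁ m₂ μ`, an
eigenfunction of `L` for `-(μ² + ρ²)`, over `0 < t < s` and applying Green's identity gives
`(φ_l(s) - φ_μ(s)) / (μ² - l²)`. The bounds `φ_l = O(e^{-(ρ - Im l) t})` and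
`b Del = O(e^{(ρ - Im l) t})` make the kernel decay like `e^{-(ρ - Im l) (s - t)}`; as `φ_μ` is
bounded, Fubini's theorem applies to every `f` that is integrable against `Del`.

The behaviour of the hypergeometric series at `x = 1` is read off from its coefficients, which
grow like `n ^ (a + b - c - 1)` and are therefore comparable with those of a binomial series
`(1 - x)^(-s)`.
-/

section HypergeometricFunction

open Filter Topology Asymptotics

local notation "hypCoeff" => ordinaryHypergeometricCoefficient

lemma ascPochhammer_eval_eq_prod_range {R : Type*} [CommSemiring R] (a : R) (n : ℕ) :
    (ascPochhammer R n).eval a = ∏ j ∈ Finset.range n, (a + j) := by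
  induction n with
  | zero => simp
  | succ n ih => rw [ascPochhammer_succ_eval, ih, Finset.prod_range_succ]

lemma ascPochhammer_eval_ne_zero {a : ℂ} (ha : ∀ k : ℕ, a ≠ -k) (n : ℕ) :
    (ascPochhammer ℂ n).eval a ≠ 0 := by
  rw [Ne, ascPochhammer_eval_eq_zero_iff]
  rintro ⟨k, -, hk⟩
  exact ha k (by rw [hk, neg_neg])

lemma ascPochhammer_succ_eval_left (a : ℂ) (n : ℕ) :
    (ascPochhammer ℂ (n + 1)).eval a = a * (ascPochhammer ℂ n).eval (a + 1) := by
  simp [ascPochhammer_succ_left]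

lemma ascPochhammer_succ_div_eq_inv_GammaSeq (a : ℂ) (n : ℕ) :
    (ascPochhammer ℂ (n + 1)).eval a / ((n : ℂ) ^ a * n.factorial) = (GammaSeq a n)⁻¹ := by
  rw [GammaSeq, ascPochhammer_eval_eq_prod_range, inv_div]

lemma tendsto_inv_GammaSeq (a : ℂ) :
    Tendsto (fun n => (GammaSeq a n)⁻¹) atTop (𝓝 (Gamma a)⁻¹) := by
  by_cases ha : ∃ k : ℕ, a = -k
  · obtain ⟨k, rfl⟩ := ha
    rw [Gamma_neg_nat_eq_zero, inv_zero]
    refine tendsto_const_nhds.congr' ?_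
    filter_upwards [eventually_ge_atTop k] with n hn
    rw [← ascPochhammer_succ_div_eq_inv_GammaSeq,
      ascPochhammer_eval_neg_coe_nat_of_lt (Nat.lt_succ_of_le hn), zero_div]
  · push Not at ha
    exact (GammaSeq_tendsto_Gamma a).inv₀ (Gamma_ne_zero ha)

lemma tendsto_natCast_div_add_natCast (a : ℂ) :
    Tendsto (fun n : ℕ => (n : ℂ) / (a + n)) atTop (𝓝 1) := by
  simpa only [add_comm] using tendsto_natCast_div_add_atTop a

lemma tendsto_ascPochhammer_div (a : ℂ) :
    Tendsto (fun n : ℕ => (ascPochhammer ℂ n).eval a / ((n : ℂ) ^ (a - 1) * n.factorial))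
      atTop (𝓝 (Gamma a)⁻¹) := by
  have hlim := (tendsto_inv_GammaSeq a).mul (tendsto_natCast_div_add_natCast a)
  rw [mul_one] at hlim
  refine hlim.congr' ?_
  filter_upwards [(tendsto_natCast_div_add_natCast a).eventually_ne one_ne_zero,
    eventually_ne_atTop 0] with n hn hn0
  obtain ⟨-, hn'⟩ := div_ne_zero_iff.1 hn
  have hn0' : (n : ℂ) ≠ 0 := Nat.cast_ne_zero.2 hn0
  rw [← ascPochhammer_succ_div_eq_inv_GammaSeq, ascPochhammer_succ_eval, cpow_sub _ _ hn0',
    cpow_one]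
  field_simp

lemma tendsto_hypCoeff_div (a b : ℂ) {c : ℂ} (hc : ∀ k : ℕ, c ≠ -k) :
    Tendsto (fun n : ℕ => hypCoeff a b c n / (n : ℂ) ^ (a + b - c - 1)) atTop
      (𝓝 (Gamma c / (Gamma a * Gamma b))) := by
  have hlim := ((tendsto_ascPochhammer_div a).mul (tendsto_ascPochhammer_div b)).div
    (tendsto_ascPochhammer_div c) (inv_ne_zero (Gamma_ne_zero hc))
  rw [← mul_inv, inv_div_inv] at hlim
  refine hlim.congr' ?_
  filter_upwards [eventually_ne_atTop 0] with n hn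
  have hn' : (n : ℂ) ≠ 0 := Nat.cast_ne_zero.2 hn
  have hfac : (n.factorial : ℂ) ≠ 0 := Nat.cast_ne_zero.2 n.factorial_ne_zero
  have hpow : ∀ z : ℂ, (n : ℂ) ^ z ≠ 0 := fun z => by simp [cpow_eq_zero_iff, hn']
  have hsplit : (n : ℂ) ^ (a - 1) * (n : ℂ) ^ (b - 1) =
      (n : ℂ) ^ (a + b - c - 1) * (n : ℂ) ^ (c - 1) := by
    rw [← cpow_add _ _ hn', ← cpow_add _ _ hn']
    ring_nf
  have hc' := ascPochhammer_eval_ne_zero hc n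
  have ha := hpow (a - 1)
  have hb := hpow (b - 1)
  have habc := hpow (a + b - c - 1)
  simp only [Pi.div_apply]
  field_simp
  linear_combination (-(ascPochhammer ℂ n).eval a * (ascPochhammer ℂ n).eval b) * hsplit

lemma ofReal_multichoose (s : ℝ) (n : ℕ) :
    ((Ring.multichoose s n : ℝ) : ℂ) = (ascPochhammer ℂ n).eval (s : ℂ) / n.factorial := by
  have hfac : (n.factorial : ℂ) ≠ 0 := Nat.cast_ne_zero.2 n.factorial_ne_zero
  have h := congrArg (fun y : ℝ => (y : ℂ)) (Ring.factorial_nsmul_multichoose_eq_ascPochhammer s n)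
  simp only [Polynomial.ascPochhammer_smeval_eq_eval, nsmul_eq_mul,
    ascPochhammer_eval_eq_prod_range] at h
  rw [eq_div_iff hfac, ascPochhammer_eval_eq_prod_range, mul_comm]
  exact_mod_cast h

lemma multichoose_pos {s : ℝ} (hs : 0 < s) (n : ℕ) : 0 < Ring.multichoose s n := by
  have h := Ring.factorial_nsmul_multichoose_eq_ascPochhammer s n
  rw [Polynomial.ascPochhammer_smeval_eq_eval, nsmul_eq_mul] at h
  exact pos_of_mul_pos_right (h ▸ ascPochhammer_pos n s hs) n.factorial.cast_nonneg

lemma hasSum_multichoose (s : ℝ) {x : ℝ} (hx : |x| < 1) :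
    HasSum (fun n => Ring.multichoose s n * x ^ n) ((1 - x) ^ s)⁻¹ := by
  have h := (Real.one_div_one_sub_rpow_hasFPowerSeriesOnBall_zero s).hasSum (y := x)
    (by simpa [← ofReal_norm] using hx)
  simpa [FormalMultilinearSeries.ofScalars_apply_eq, Ring.multichoose_eq, mul_comm] using h

lemma tendsto_multichoose_div (s : ℝ) :
    Tendsto (fun n : ℕ => ((Ring.multichoose s n : ℝ) : ℂ) / (n : ℂ) ^ ((s : ℂ) - 1)) atTop
      (𝓝 (Gamma s)⁻¹) := by
  refine (tendsto_ascPochhammer_div s).congr fun n => ?_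
  rw [ofReal_multichoose, div_div, mul_comm]

lemma isTheta_natCast_cpow (z : ℂ) :
    (fun n : ℕ => (n : ℂ) ^ z) =Θ[atTop] fun n : ℕ => (n : ℝ) ^ z.re := by
  refine IsTheta.of_norm_eventuallyEq_norm ?_
  filter_upwards [eventually_gt_atTop 0] with n hn
  rw [norm_natCast_cpow_of_pos hn, Real.norm_of_nonneg (by positivity)]

lemma isBigO_hypCoeff (a b : ℂ) {c : ℂ} (hc : ∀ k : ℕ, c ≠ -k) :
    (fun n => hypCoeff a b c n) =O[atTop] fun n : ℕ => (n : ℝ) ^ ((a + b - c).re - 1) := by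
  refine (isBigO_of_div_tendsto_nhds ?_ _ (tendsto_hypCoeff_div a b hc)).trans
    (isTheta_natCast_cpow (a + b - c - 1)).isBigO
  filter_upwards [eventually_ne_atTop 0] with n hn h
  simp [cpow_eq_zero_iff, hn] at h

lemma isBigO_rpow_multichoose {s : ℝ} (hs : 0 < s) :
    (fun n : ℕ => (n : ℝ) ^ (s - 1)) =O[atTop] fun n => Ring.multichoose s n := by
  have h := (isBigO_of_div_tendsto_nhds_of_ne_zero (tendsto_multichoose_div s)
    (inv_ne_zero (Gamma_ne_zero_of_re_pos (by simpa using hs))))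
  have h' := (isTheta_natCast_cpow ((s : ℂ) - 1)).symm.isBigO.trans h
  simpa using h'.norm_right

lemma exists_norm_hypCoeff_le (a b : ℂ) {c : ℂ} (hc : ∀ k : ℕ, c ≠ -k) {s : ℝ} (hs : 0 < s)
    (habc : (a + b - c).re ≤ s) :
    ∃ C > 0, ∀ n, ‖hypCoeff a b c n‖ ≤ C * Ring.multichoose s n := by
  have hpow : (fun n : ℕ => (n : ℝ) ^ ((a + b - c).re - 1)) =O[atTop]
      fun n : ℕ => (n : ℝ) ^ (s - 1) := by
    refine IsBigO.of_norm_eventuallyLE ?_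
    filter_upwards [eventually_ge_atTop 1] with n hn
    rw [Real.norm_of_nonneg (by positivity)]
    exact Real.rpow_le_rpow_of_exponent_le (by exact_mod_cast hn) (by linarith)
  obtain ⟨C, hC, h⟩ := bound_of_isBigO_nat_atTop
    (((isBigO_hypCoeff a b hc).trans hpow).trans (isBigO_rpow_multichoose hs))
  refine ⟨C, hC, fun n => ?_⟩
  simpa only [Real.norm_of_nonneg (multichoose_pos hs n).le] using h (multichoose_pos hs n).ne'

lemma summable_norm_hypCoeff {a b c : ℂ} (hc : ∀ k : ℕ, c ≠ -k) (habc : (a + b - c).re < 0) :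
    Summable fun n => ‖hypCoeff a b c n‖ :=
  summable_of_isBigO_nat (Real.summable_nat_rpow.2 (by linarith)) (isBigO_hypCoeff a b hc).norm_left

lemma tendsto_hypCoeff_div_multichoose {a b c : ℂ} (hc : ∀ k : ℕ, c ≠ -k) {s : ℝ} (hs : 0 < s)
    (habc : a + b - c = s) :
    Tendsto (fun n => hypCoeff a b c n / ((Ring.multichoose s n : ℝ) : ℂ)) atTop
      (𝓝 (Gamma c * Gamma s / (Gamma a * Gamma b))) := by
  have hlim := (tendsto_hypCoeff_div a b hc).div (tendsto_multichoose_div s)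
    (inv_ne_zero (Gamma_ne_zero_of_re_pos (by simpa using hs)))
  rw [div_inv_eq_mul, div_mul_eq_mul_div] at hlim
  refine hlim.congr' ?_
  filter_upwards [eventually_ne_atTop 0] with n hn
  rw [Pi.div_apply, habc, div_div_div_cancel_right₀]
  simp [cpow_eq_zero_iff, hn]

lemma hyp_eq_tsum (a b c x : ℂ) : hyp a b c x = ∑' n, hypCoeff a b c n * x ^ n :=
  tsum_congr fun n => by rw [div_eq_mul_inv, mul_inv]; ring

lemma summable_norm_hypCoeff_mul_pow (a b : ℂ) {c : ℂ} (hc : ∀ k : ℕ, c ≠ -k) {r : ℝ}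
    (hr : 0 ≤ r) (hr1 : r < 1) : Summable fun n => ‖hypCoeff a b c n‖ * r ^ n := by
  obtain ⟨C, -, hC⟩ := exists_norm_hypCoeff_le a b hc (s := max 1 (a + b - c).re) (by positivity)
    (le_max_right _ _)
  have hsum := (hasSum_multichoose (max 1 (a + b - c).re) (x := r)
    (by rwa [abs_of_nonneg hr])).summable.mul_left C
  refine hsum.of_nonneg_of_le (fun n => by positivity) fun n => ?_
  rw [← mul_assoc]
  exact mul_le_mul_of_nonneg_right (hC n) (by positivity)

lemma hasSum_hyp (a b : ℂ) {c x : ℂ} (hc : ∀ k : ℕ, c ≠ -k) (hx : ‖x‖ < 1) :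
    HasSum (fun n => hypCoeff a b c n * x ^ n) (hyp a b c x) := by
  rw [hyp_eq_tsum]
  refine (Summable.of_norm ?_).hasSum
  simpa only [norm_mul, norm_pow] using summable_norm_hypCoeff_mul_pow a b hc (norm_nonneg x) hx

lemma exists_ball_norm_hypCoeff_mul_pow_le (a b : ℂ) {c x : ℂ} (hc : ∀ k : ℕ, c ≠ -k)
    (hx : ‖x‖ < 1) :
    ∃ r, x ∈ Metric.ball (0 : ℂ) r ∧ Summable (fun n => ‖hypCoeff a b c n‖ * r ^ n) ∧
      ∀ n, ∀ y ∈ Metric.ball (0 : ℂ) r,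
        ‖hypCoeff a b c n * y ^ n‖ ≤ ‖hypCoeff a b c n‖ * r ^ n := by
  obtain ⟨r, hxr, hr⟩ := exists_between hx
  refine ⟨r, mem_ball_zero_iff.2 hxr,
    summable_norm_hypCoeff_mul_pow a b hc ((norm_nonneg x).trans hxr.le) hr, fun n y hy => ?_⟩
  rw [norm_mul, norm_pow]
  gcongr
  exact (mem_ball_zero_iff.1 hy).le

lemma differentiableAt_hyp (a b : ℂ) {c x : ℂ} (hc : ∀ k : ℕ, c ≠ -k) (hx : ‖x‖ < 1) :
    DifferentiableAt ℂ (hyp a b c) x := by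
  obtain ⟨r, hxr, hsum, hle⟩ := exists_ball_norm_hypCoeff_mul_pow_le a b hc hx
  have h := differentiableOn_tsum_of_summable_norm hsum (fun n => by fun_prop)
    Metric.isOpen_ball hle
  rw [← funext (hyp_eq_tsum a b c)] at h
  exact h.differentiableAt (Metric.isOpen_ball.mem_nhds hxr)

lemma hasSum_deriv_hyp (a b : ℂ) {c x : ℂ} (hc : ∀ k : ℕ, c ≠ -k) (hx : ‖x‖ < 1) :
    HasSum (fun n : ℕ => (n + 1) * hypCoeff a b c (n + 1) * x ^ n) (deriv (hyp a b c) x) := by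
  obtain ⟨r, hxr, hsum, hle⟩ := exists_ball_norm_hypCoeff_mul_pow_le a b hc hx
  have h := hasSum_deriv_of_summable_norm hsum (fun n => by fun_prop) Metric.isOpen_ball hle hxr
  rw [← funext (hyp_eq_tsum a b c), ← hasSum_nat_add_iff' 1] at h
  simp only [deriv_const_mul_field', deriv_pow_field, Finset.range_one, Finset.sum_singleton,
    Nat.cast_zero, zero_mul, mul_zero, sub_zero, add_tsub_cancel_right] at h
  refine h.congr_fun fun n => ?_
  push_cast
  ring

lemma ne_neg_natCast_add_one {c : ℂ} (hc : ∀ k : ℕ, c ≠ -k) (k : ℕ) : c + 1 ≠ -k := fun h =>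
  hc (k + 1) (by push_cast; linear_combination h)

lemma hypCoeff_succ_eq_mul_shift (a b : ℂ) {c : ℂ} (hc : ∀ k : ℕ, c ≠ -k) (n : ℕ) :
    (n + 1) * hypCoeff a b c (n + 1) = a * b / c * hypCoeff (a + 1) (b + 1) (c + 1) n := by
  have hc0 : c ≠ 0 := by simpa using hc 0
  have hpoch := ascPochhammer_eval_ne_zero (ne_neg_natCast_add_one hc) n
  have hfac : (n.factorial : ℂ) ≠ 0 := Nat.cast_ne_zero.2 n.factorial_ne_zero
  have hn : (n : ℂ) + 1 ≠ 0 := n.cast_add_one_ne_zero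
  simp only [ordinaryHypergeometricCoefficient, ascPochhammer_succ_eval_left, Nat.factorial_succ,
    Nat.cast_mul, Nat.cast_add, Nat.cast_one]
  field_simp

lemma hypCoeff_succ (a b : ℂ) {c : ℂ} (hc : ∀ k : ℕ, c ≠ -k) (n : ℕ) :
    (n + c) * ((n + 1) * hypCoeff a b c (n + 1)) = (n + a) * (n + b) * hypCoeff a b c n := by
  have hcn : c + n ≠ 0 := fun h => hc n (eq_neg_of_add_eq_zero_left h)
  have hpoch := ascPochhammer_eval_ne_zero hc n
  have hfac : (n.factorial : ℂ) ≠ 0 := Nat.cast_ne_zero.2 n.factorial_ne_zero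
  have hn : (n : ℂ) + 1 ≠ 0 := n.cast_add_one_ne_zero
  simp only [ordinaryHypergeometricCoefficient, ascPochhammer_succ_eval, Nat.factorial_succ,
    Nat.cast_mul, Nat.cast_add, Nat.cast_one]
  field_simp
  ring

lemma deriv_hyp (a b : ℂ) {c x : ℂ} (hc : ∀ k : ℕ, c ≠ -k) (hx : ‖x‖ < 1) :
    deriv (hyp a b c) x = a * b / c * hyp (a + 1) (b + 1) (c + 1) x := by
  refine (hasSum_deriv_hyp a b hc hx).unique
    (((hasSum_hyp (a + 1) (b + 1) (ne_neg_natCast_add_one hc) hx).mul_left (a * b / c)).congr_fun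
      fun n => ?_)
  rw [hypCoeff_succ_eq_mul_shift a b hc, mul_assoc]

lemma deriv_hyp_eventuallyEq (a b : ℂ) {c x : ℂ} (hc : ∀ k : ℕ, c ≠ -k) (hx : ‖x‖ < 1) :
    deriv (hyp a b c) =ᶠ[𝓝 x] fun y => a * b / c * hyp (a + 1) (b + 1) (c + 1) y := by
  filter_upwards [continuous_norm.continuousAt.eventually_lt continuousAt_const hx] with y hy
  exact deriv_hyp a b hc hy

lemma hasSum_deriv_deriv_hyp (a b : ℂ) {c x : ℂ} (hc : ∀ k : ℕ, c ≠ -k) (hx : ‖x‖ < 1) :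
    HasSum (fun n : ℕ => (n + 1) * ((n + 2) * hypCoeff a b c (n + 2)) * x ^ n)
      (deriv (deriv (hyp a b c)) x) := by
  rw [(deriv_hyp_eventuallyEq a b hc hx).deriv_eq, deriv_const_mul_field']
  refine ((hasSum_deriv_hyp (a + 1) (b + 1) (ne_neg_natCast_add_one hc) hx).mul_left
    (a * b / c)).congr_fun fun n => ?_
  have h := hypCoeff_succ_eq_mul_shift a b hc (n + 1)
  push_cast at h
  linear_combination ((n : ℂ) + 1) * x ^ n * h

lemma hasSum_natCast_mul {q : ℕ → ℂ} {x S : ℂ}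
    (h : HasSum (fun n : ℕ => (n + 1) * q (n + 1) * x ^ n) S) :
    HasSum (fun n : ℕ => n * q n * x ^ n) (x * S) := by
  rw [← hasSum_nat_add_iff' 1]
  simp only [Finset.range_one, Finset.sum_singleton, Nat.cast_zero, zero_mul, sub_zero]
  refine (h.mul_left x).congr_fun fun n => ?_
  push_cast
  ring

lemma hyp_differential_equation (a b : ℂ) {c x : ℂ} (hc : ∀ k : ℕ, c ≠ -k) (hx : ‖x‖ < 1) :
    x * (1 - x) * deriv (deriv (hyp a b c)) x + (c - (a + b + 1) * x) * deriv (hyp a b c) x =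
      a * b * hyp a b c x := by
  have h₀ := hasSum_hyp a b hc hx
  have h₁ := hasSum_deriv_hyp a b hc hx
  have h₂ := hasSum_deriv_deriv_hyp a b hc hx
  have hx₁ := hasSum_natCast_mul h₁
  have hx₂ := hasSum_natCast_mul (q := fun n => (n + 1) * hypCoeff a b c (n + 1))
    (h₂.congr_fun fun n => by push_cast; ring)
  have hxx₂ := hasSum_natCast_mul (q := fun n => ((n : ℂ) - 1) * hypCoeff a b c n)
    (hx₂.congr_fun fun n => by push_cast; ring)
  have hsum := ((hx₂.sub hxx₂).add ((h₁.mul_left c).sub (hx₁.mul_left (a + b + 1)))).unique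
    ((h₀.mul_left (a * b)).congr_fun fun n => ?_)
  · linear_combination hsum
  · linear_combination x ^ n * hypCoeff_succ a b hc n

lemma exists_norm_hyp_le_mul_rpow (a b : ℂ) {c : ℂ} (hc : ∀ k : ℕ, c ≠ -k) {s : ℝ} (hs : 0 < s)
    (habc : (a + b - c).re ≤ s) :
    ∃ C > 0, ∀ x ∈ Ico (0 : ℝ) 1, ‖hyp a b c x‖ ≤ C * ((1 - x) ^ s)⁻¹ := by
  obtain ⟨C, hC, hcoeff⟩ := exists_norm_hypCoeff_le a b hc hs habc
  refine ⟨C, hC, fun x ⟨hx0, hx1⟩ => ?_⟩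
  rw [hyp_eq_tsum]
  refine tsum_of_norm_bounded ((hasSum_multichoose s (by rwa [abs_of_nonneg hx0])).mul_left C)
    fun n => ?_
  rw [norm_mul, norm_pow, norm_real, Real.norm_of_nonneg hx0, ← mul_assoc]
  exact mul_le_mul_of_nonneg_right (hcoeff n) (by positivity)

lemma exists_norm_hyp_le {a b c : ℂ} (hc : ∀ k : ℕ, c ≠ -k) (habc : (a + b - c).re < 0) :
    ∃ C, ∀ x ∈ Ico (0 : ℝ) 1, ‖hyp a b c x‖ ≤ C := by
  refine ⟨∑' n, ‖hypCoeff a b c n‖, fun x ⟨hx0, hx1⟩ => ?_⟩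
  rw [hyp_eq_tsum]
  refine tsum_of_norm_bounded (summable_norm_hypCoeff hc habc).hasSum fun n => ?_
  rw [norm_mul, norm_pow, norm_real, Real.norm_of_nonneg hx0]
  exact mul_le_of_le_one_right (norm_nonneg _) (pow_le_one₀ hx0 hx1.le)

lemma isLittleO_tsum_mul_pow {p : ℕ → ℝ} {P : ℝ → ℝ} {q : ℕ → ℂ} (hp : ∀ n, 0 ≤ p n)
    (hsum : ∀ x ∈ Ioo (0 : ℝ) 1, HasSum (fun n => p n * x ^ n) (P x))
    (hP : Tendsto P (𝓝[<] 1) atTop) (hq : q =o[atTop] p) :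
    (fun x : ℝ => ∑' n, q n * (x : ℂ) ^ n) =o[𝓝[<] 1] P := by
  refine isLittleO_iff.2 fun ε hε => ?_
  obtain ⟨N, hN⟩ := eventually_atTop.1 (isLittleO_iff.1 hq (half_pos hε))
  set head : ℝ := ∑ n ∈ Finset.range N, ‖q n‖
  have hhead : HasSum (fun n => if n ∈ Finset.range N then ‖q n‖ else 0) head := by
    have h := hasSum_sum_of_ne_finset_zero (L := .unconditional ℕ) (s := Finset.range N)
      (f := fun n => if n ∈ Finset.range N then ‖q n‖ else 0) fun n hn => if_neg hn
    rwa [Finset.sum_ite_mem, Finset.inter_self] at h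
  filter_upwards [hP.eventually_ge_atTop 0, hP.eventually_ge_atTop (2 * head / ε),
    Ioo_mem_nhdsLT one_pos] with x hP0 hPx hx
  have hterm : ∀ n, ‖q n * (x : ℂ) ^ n‖ ≤
      (if n ∈ Finset.range N then ‖q n‖ else 0) + ε / 2 * (p n * x ^ n) := fun n => by
    have hpow : 0 ≤ x ^ n := pow_nonneg hx.1.le n
    rw [norm_mul, norm_pow, norm_real, Real.norm_of_nonneg hx.1.le]
    split_ifs with hn
    · have hqn := mul_le_of_le_one_right (norm_nonneg (q n)) (pow_le_one₀ hx.1.le hx.2.le (n := n))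
      have hpn := hp n
      exact hqn.trans (le_add_of_nonneg_right (by positivity))
    · have hqn := hN n (by simpa using hn)
      rw [Real.norm_of_nonneg (hp n)] at hqn
      rw [zero_add, ← mul_assoc]
      exact mul_le_mul_of_nonneg_right hqn hpow
  calc ‖∑' n, q n * (x : ℂ) ^ n‖ ≤ head + ε / 2 * P x :=
        tsum_of_norm_bounded (hhead.add ((hsum x hx).mul_left _)) hterm
    _ ≤ ε / 2 * P x + ε / 2 * P x := by
        gcongr
        rw [div_le_iff₀ hε] at hPx
        linarith
    _ = ε * ‖P x‖ := by rw [Real.norm_of_nonneg hP0]; ring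

lemma tendsto_inv_one_sub_rpow {s : ℝ} (hs : 0 < s) :
    Tendsto (fun x : ℝ => ((1 - x) ^ s)⁻¹) (𝓝[<] 1) atTop := by
  refine tendsto_inv_nhdsGT_zero.comp (tendsto_nhdsWithin_iff.2 ⟨?_, ?_⟩)
  · have h : ContinuousAt (fun x : ℝ => (1 - x) ^ s) 1 :=
      ContinuousAt.rpow_const (by fun_prop) (Or.inr hs.le)
    simpa [Real.zero_rpow hs.ne'] using h.tendsto.mono_left nhdsWithin_le_nhds
  · filter_upwards [self_mem_nhdsWithin] with x hx
    exact Real.rpow_pos_of_pos (sub_pos.2 hx) s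

lemma isLittleO_hypCoeff_sub_multichoose {a b c : ℂ} (hc : ∀ k : ℕ, c ≠ -k) {s : ℝ} (hs : 0 < s)
    (habc : a + b - c = s) :
    (fun n => hypCoeff a b c n -
        Gamma c * Gamma s / (Gamma a * Gamma b) * (Ring.multichoose s n : ℝ)) =o[atTop]
      fun n => Ring.multichoose s n := by
  have hne : ∀ n, ((Ring.multichoose s n : ℝ) : ℂ) ≠ 0 := fun n =>
    ofReal_ne_zero.2 (multichoose_pos hs n).ne'
  rw [← isLittleO_ofReal_right, isLittleO_iff_tendsto fun n h => absurd h (hne n)]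
  simpa [sub_div, mul_div_assoc, hne] using
    (tendsto_hypCoeff_div_multichoose hc hs habc).sub_const
      (Gamma c * Gamma s / (Gamma a * Gamma b))

lemma tendsto_one_sub_rpow_mul_hyp {a b c : ℂ} (hc : ∀ k : ℕ, c ≠ -k) {s : ℝ} (hs : 0 < s)
    (habc : a + b - c = s) :
    Tendsto (fun x : ℝ => (((1 - x) ^ s : ℝ) : ℂ) * hyp a b c x) (𝓝[<] 1)
      (𝓝 (Gamma c * Gamma s / (Gamma a * Gamma b))) := by
  set K := Gamma c * Gamma s / (Gamma a * Gamma b)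
  have hbinom : ∀ x ∈ Ioo (0 : ℝ) 1,
      HasSum (fun n => Ring.multichoose s n * x ^ n) ((1 - x) ^ s)⁻¹ := fun x hx =>
    hasSum_multichoose s (by rw [abs_of_nonneg hx.1.le]; exact hx.2)
  have hlim := (isLittleO_tsum_mul_pow (fun n => (multichoose_pos hs n).le) hbinom
    (tendsto_inv_one_sub_rpow hs)
    (isLittleO_hypCoeff_sub_multichoose hc hs habc)).tendsto_inv_smul_nhds_zero
  rw [← zero_add K]
  refine (hlim.add_const K).congr' ?_
  filter_upwards [Ioo_mem_nhdsLT one_pos] with x hx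
  have hrpow : (((1 - x) ^ s : ℝ) : ℂ) ≠ 0 :=
    ofReal_ne_zero.2 (Real.rpow_pos_of_pos (sub_pos.2 hx.2) s).ne'
  have hsub := ((hasSum_hyp a b hc (x := x)
    (by rw [norm_real, Real.norm_of_nonneg hx.1.le]; exact hx.2)).sub
    ((hasSum_ofReal.2 (hbinom x hx)).mul_left K)).congr_fun
    (g := fun n => (hypCoeff a b c n - K * (Ring.multichoose s n : ℝ)) * (x : ℂ) ^ n)
    fun n => by push_cast; ring
  rw [hsub.tsum_eq, inv_inv, real_smul]
  push_cast [ofReal_inv] at hrpow ⊢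
  field_simp
  ring

end HypergeometricFunction

section TriangleFubini

variable {K : ℝ → ℝ → ℂ} {g : ℝ → ℂ} {a C : ℝ}

lemma integrable_indicator_lt_mul
    (hK : AEStronglyMeasurable (fun p : ℝ × ℝ => K p.2 p.1)
      ((volume.restrict (Ioi a)).prod (volume.restrict (Ioi a))))
    (hKint : ∀ s ∈ Ioi a, IntegrableOn (K s) (Ioo a s))
    (hKC : ∀ s ∈ Ioi a, ∫ t in Ioo a s, ‖K s t‖ ≤ C) (hg : IntegrableOn g (Ioi a)) :
    Integrable ({p : ℝ × ℝ | p.1 < p.2}.indicator fun p => g p.2 * K p.2 p.1)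
      ((volume.restrict (Ioi a)).prod (volume.restrict (Ioi a))) := by
  have hmeas : AEStronglyMeasurable ({p : ℝ × ℝ | p.1 < p.2}.indicator
      fun p => g p.2 * K p.2 p.1) ((volume.restrict (Ioi a)).prod (volume.restrict (Ioi a))) :=
    (hg.aestronglyMeasurable.comp_snd.mul hK).indicator
      (measurableSet_lt measurable_fst measurable_snd)
  have hslice (s : ℝ) : (fun t => {p : ℝ × ℝ | p.1 < p.2}.indicator
      (fun p => g p.2 * K p.2 p.1) (t, s)) = (Iio s).indicator fun t => g s * K s t := rfl
  refine (integrable_prod_iff' hmeas).2 ⟨?_, (hg.norm.mul_const C).mono'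
    hmeas.norm.prod_swap.integral_prod_right' ?_⟩
  all_goals refine (ae_restrict_iff' measurableSet_Ioi).2 (.of_forall fun s hs => ?_)
  · rw [hslice, integrable_indicator_iff measurableSet_Iio, IntegrableOn,
      Measure.restrict_restrict measurableSet_Iio, inter_comm, Ioi_inter_Iio]
    exact (hKint s hs).const_mul _
  · rw [Real.norm_of_nonneg (integral_nonneg fun _ => norm_nonneg _)]
    change ∫ t in Ioi a, ‖(Iio s).indicator (fun t => g s * K s t) t‖ ≤ ‖g s‖ * C
    simp only [norm_indicator_eq_indicator_norm, norm_mul]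
    rw [setIntegral_indicator measurableSet_Iio, Ioi_inter_Iio, integral_const_mul]
    exact mul_le_mul_of_nonneg_left (hKC s hs) (norm_nonneg _)

lemma integral_integral_Ioi_mul
    (hK : AEStronglyMeasurable (fun p : ℝ × ℝ => K p.2 p.1)
      ((volume.restrict (Ioi a)).prod (volume.restrict (Ioi a))))
    (hKint : ∀ s ∈ Ioi a, IntegrableOn (K s) (Ioo a s))
    (hKC : ∀ s ∈ Ioi a, ∫ t in Ioo a s, ‖K s t‖ ≤ C) (hg : IntegrableOn g (Ioi a)) :
    IntegrableOn (fun t => ∫ s in Ioi t, g s * K s t) (Ioi a) ∧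
      ∫ t in Ioi a, ∫ s in Ioi t, g s * K s t =
        ∫ s in Ioi a, g s * ∫ t in Ioo a s, K s t := by
  have hint := integrable_indicator_lt_mul hK hKint hKC hg
  have hinner_s : ∀ t ∈ Ioi a, ∫ s in Ioi a, {p : ℝ × ℝ | p.1 < p.2}.indicator
      (fun p => g p.2 * K p.2 p.1) (t, s) = ∫ s in Ioi t, g s * K s t := fun t ht => by
    change ∫ s in Ioi a, (Ioi t).indicator (fun s => g s * K s t) s = _
    rw [setIntegral_indicator measurableSet_Ioi, inter_eq_right.2 (Ioi_subset_Ioi ht.le)]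
  have hinner_t (s : ℝ) : ∫ t in Ioi a, {p : ℝ × ℝ | p.1 < p.2}.indicator
      (fun p => g p.2 * K p.2 p.1) (t, s) = g s * ∫ t in Ioo a s, K s t := by
    change ∫ t in Ioi a, (Iio s).indicator (fun t => g s * K s t) t = _
    rw [setIntegral_indicator measurableSet_Iio, Ioi_inter_Iio, integral_const_mul]
  refine ⟨hint.integral_prod_left.congr
    ((ae_restrict_iff' measurableSet_Ioi).2 (.of_forall hinner_s)), ?_⟩
  rw [← setIntegral_congr_fun measurableSet_Ioi hinner_s, ← integral_prod _ hint,
    integral_prod_symm _ hint]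
  simp only [hinner_t]

end TriangleFubini

lemma integrableOn_Ioo_and_integral_norm_le {E : Type*} [NormedAddCommGroup E] {k : ℝ → E}
    {M δ a s : ℝ} (hM : 0 ≤ M) (hδ : 0 < δ) (hk : ContinuousOn k (Ioo a s))
    (hle : ∀ t ∈ Ioo a s, ‖k t‖ ≤ M * Real.exp (-(δ * (s - t)))) :
    IntegrableOn k (Ioo a s) ∧ ∫ t in Ioo a s, ‖k t‖ ≤ M / δ := by
  have hsub : Ioo a s ⊆ Iic s := fun t ht => ht.2.le
  have hexp : IntegrableOn (fun t => M * Real.exp (-(δ * s)) * Real.exp (δ * t)) (Iic s) :=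
    (integrableOn_exp_mul_Iic hδ s).const_mul _
  have hle' : ∀ t ∈ Ioo a s, ‖k t‖ ≤ M * Real.exp (-(δ * s)) * Real.exp (δ * t) := fun t ht => by
    rw [mul_assoc, ← Real.exp_add]
    convert hle t ht using 3
    ring
  have hint : IntegrableOn k (Ioo a s) := (hexp.mono_set hsub).mono'
    (hk.aestronglyMeasurable measurableSet_Ioo)
    ((ae_restrict_iff' measurableSet_Ioo).2 (.of_forall hle'))
  refine ⟨hint, ?_⟩
  calc ∫ t in Ioo a s, ‖k t‖
      ≤ ∫ t in Ioo a s, M * Real.exp (-(δ * s)) * Real.exp (δ * t) :=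
        setIntegral_mono_on hint.norm (hexp.mono_set hsub) measurableSet_Ioo hle'
    _ ≤ ∫ t in Iic s, M * Real.exp (-(δ * s)) * Real.exp (δ * t) :=
        setIntegral_mono_set hexp (.of_forall fun t => by positivity) hsub.eventuallyLE
    _ = M / δ := by
        rw [integral_const_mul, integral_exp_mul_Iic hδ, Real.exp_neg]
        field_simp

section SturmLiouville

open Filter Topology

/-- `u` solves the Sturm–Liouville equation `(w u')' = κ w u` on `(0, ∞)`. -/
structure IsSturmLiouvilleSol (w : ℝ → ℝ) (κ : ℂ) (u : ℝ → ℂ) : Prop where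
  differentiableAt : ∀ t, 0 < t → DifferentiableAt ℝ u t
  hasDerivAt_flux : ∀ t, 0 < t →
    HasDerivAt (fun t => (w t : ℂ) * deriv u t) (κ * (w t : ℂ) * u t) t

/-- The Wronskian of `u` and `v` weighted by `w`; it is constant when both functions solve the
Sturm–Liouville equation for `w` with the same eigenvalue. -/
def wronskian (w : ℝ → ℝ) (u v : ℝ → ℂ) (t : ℝ) : ℂ :=
  w t * (u t * deriv v t - deriv u t * v t)

variable {w : ℝ → ℝ} {κ ν : ℂ} {u b v : ℝ → ℂ}

lemma IsSturmLiouvilleSol.of_hasDerivAt {u' : ℝ → ℂ} (hu : ∀ t, 0 < t → HasDerivAt u (u' t) t)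
    (hflux : ∀ t, 0 < t →
      HasDerivAt (fun t => (w t : ℂ) * u' t) (κ * (w t : ℂ) * u t) t) :
    IsSturmLiouvilleSol w κ u where
  differentiableAt t ht := (hu t ht).differentiableAt
  hasDerivAt_flux t ht := (hflux t ht).congr_of_eventuallyEq <| by
    filter_upwards [Ioi_mem_nhds ht] with s hs
    rw [(hu s hs).deriv]

namespace IsSturmLiouvilleSol

lemma continuousOn (hu : IsSturmLiouvilleSol w κ u) : ContinuousOn u (Ioi 0) :=
  fun t ht => (hu.differentiableAt t ht).continuousAt.continuousWithinAt

lemma const_mul (hu : IsSturmLiouvilleSol w κ u) (k : ℂ) :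
    IsSturmLiouvilleSol w κ (fun t => k * u t) :=
  .of_hasDerivAt (u' := fun t => k * deriv u t)
    (fun t ht => (hu.differentiableAt t ht).hasDerivAt.const_mul k) fun t ht => by
      simp only [mul_left_comm _ k]
      exact (hu.hasDerivAt_flux t ht).const_mul k

lemma hasDerivAt_wronskian (hu : IsSturmLiouvilleSol w κ u) (hv : IsSturmLiouvilleSol w ν v)
    {t : ℝ} (ht : 0 < t) :
    HasDerivAt (wronskian w u v) ((ν - κ) * (u t * v t * w t)) t := by
  have h := ((hu.differentiableAt t ht).hasDerivAt.mul (hv.hasDerivAt_flux t ht)).sub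
    ((hu.hasDerivAt_flux t ht).mul (hv.differentiableAt t ht).hasDerivAt)
  refine (h.congr_deriv (by ring)).congr_of_eventuallyEq (.of_forall fun s => ?_)
  simp only [wronskian, Pi.sub_apply, Pi.mul_apply]
  ring

lemma wronskian_eq_of_tendsto (hu : IsSturmLiouvilleSol w κ u) (hv : IsSturmLiouvilleSol w κ v)
    {k : ℂ} (hk : Tendsto (wronskian w u v) (𝓝[>] 0) (𝓝 k)) {s : ℝ} (hs : 0 < s) :
    wronskian w u v s = k := by
  have hderiv : ∀ t ∈ Ioi (0 : ℝ), HasDerivAt (wronskian w u v) 0 t := fun t ht =>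
    (hu.hasDerivAt_wronskian hv ht).congr_deriv (by rw [sub_self, zero_mul])
  have hconst : ∀ t ∈ Ioi (0 : ℝ), wronskian w u v t = wronskian w u v s := fun t ht =>
    isOpen_Ioi.is_const_of_deriv_eq_zero (convex_Ioi 0).isPreconnected
      (fun x hx => (hderiv x hx).differentiableAt.differentiableWithinAt)
      (fun x hx => (hderiv x hx).deriv) ht hs
  refine tendsto_nhds_unique (tendsto_const_nhds.congr' ?_) hk
  filter_upwards [self_mem_nhdsWithin] with t ht using (hconst t ht).symm

end IsSturmLiouvilleSol

lemma tendsto_wronskian_zero {x y : ℂ} (hw : Tendsto (fun t => (w t : ℂ)) (𝓝[>] 0) (𝓝 0))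
    (hu : Tendsto u (𝓝[>] 0) (𝓝 x)) (hu' : Tendsto (deriv u) (𝓝[>] 0) (𝓝 0))
    (hv : Tendsto v (𝓝[>] 0) (𝓝 y)) (hv' : Tendsto (deriv v) (𝓝[>] 0) (𝓝 0)) :
    Tendsto (wronskian w u v) (𝓝[>] 0) (𝓝 0) := by
  have h := hw.mul ((hu.mul hv').sub (hu'.mul hv))
  rwa [zero_mul] at h

lemma tendsto_wronskian_of_tendsto_flux {x y : ℂ}
    (hb : IsBoundedUnder (· ≤ ·) (𝓝[>] 0) fun t => ‖(w t : ℂ) * b t‖)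
    (hb' : Tendsto (fun t => (w t : ℂ) * deriv b t) (𝓝[>] 0) (𝓝 x))
    (hv : Tendsto v (𝓝[>] 0) (𝓝 y)) (hv' : Tendsto (deriv v) (𝓝[>] 0) (𝓝 0)) :
    Tendsto (wronskian w b v) (𝓝[>] 0) (𝓝 (-(x * y))) := by
  have h := (hv'.zero_mul_isBoundedUnder_le hb).sub (hb'.mul hv)
  rw [zero_sub] at h
  refine h.congr fun t => ?_
  rw [wronskian]
  ring

/-- The Volterra operator whose kernel `b(t) u(s) - u(t) b(s)`, `t < s`, is built from two
solutions `u`, `b` of the same Sturm–Liouville equation. -/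
def volterraOperator (w : ℝ → ℝ) (u b f : ℝ → ℂ) (t : ℝ) : ℂ :=
  b t * (∫ s in Ioi t, f s * u s * w s) - u t * ∫ s in Ioi t, f s * b s * w s

/-- The kernel `K(s, t)` of `f ↦ volterraOperator w u b f · v · w` with respect to the measure
`w(s) ds`. -/
def volterraKernel (w : ℝ → ℝ) (u b v : ℝ → ℂ) (s t : ℝ) : ℂ :=
  (u s * b t - b s * u t) * v t * w t

lemma integrableOn_mul_mul_weight {f g : ℝ → ℂ} {a C : ℝ}
    (hf : IntegrableOn (fun s => f s * w s) (Ioi a)) (hg : ContinuousOn g (Ioi a))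
    (hC : ∀ s, a < s → ‖g s‖ ≤ C) : IntegrableOn (fun s => f s * g s * w s) (Ioi a) := by
  simp only [mul_right_comm _ (g _)]
  exact hf.mul_bdd (c := C) (hg.aestronglyMeasurable measurableSet_Ioi)
    ((ae_restrict_iff' measurableSet_Ioi).2 (.of_forall hC))

/-- A positive weight `w` with two solutions of its Sturm–Liouville equation, `u` decaying at
infinity at rate `δ` and `b` possibly singular at `0`, whose growth is balanced so that the
Volterra kernel `(u(s) b(t) - b(s) u(t)) w(t)` decays like `exp (-δ (s - t))`. -/
structure IsVolterraPair (w : ℝ → ℝ) (κ : ℂ) (δ : ℝ) (u b : ℝ → ℂ) : Prop where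
  rate_pos : 0 < δ
  continuousOn_weight : ContinuousOn w (Ioi 0)
  weight_pos : ∀ t, 0 < t → 0 < w t
  isSol_left : IsSturmLiouvilleSol w κ u
  isSol_right : IsSturmLiouvilleSol w κ b
  norm_left_le : ∃ A, ∀ t, 0 < t → ‖u t‖ ≤ A * Real.exp (-(δ * t))
  norm_right_mul_weight_le : ∃ B, ∀ t s, 0 < t → t ≤ s →
    ‖b s‖ * w t ≤ B * Real.exp (δ * (2 * t - s))

namespace IsVolterraPair

variable {δ X : ℝ} {f : ℝ → ℂ}

lemma exists_norm_left_le (h : IsVolterraPair w κ δ u b) : ∃ C, ∀ t, 0 < t → ‖u t‖ ≤ C := by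
  obtain ⟨A, hA⟩ := h.norm_left_le
  have hA0 : 0 ≤ A := nonneg_of_mul_nonneg_left ((norm_nonneg _).trans (hA 1 one_pos))
    (Real.exp_pos _)
  refine ⟨A, fun t ht => (hA t ht).trans (mul_le_of_le_one_right hA0 (Real.exp_le_one_iff.2 ?_))⟩
  exact neg_nonpos.2 (mul_pos h.rate_pos ht).le

lemma exists_norm_right_le (h : IsVolterraPair w κ δ u b) {t : ℝ} (ht : 0 < t) :
    ∃ C, ∀ s, t < s → ‖b s‖ ≤ C := by
  obtain ⟨B, hB⟩ := h.norm_right_mul_weight_le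
  have hw := h.weight_pos t ht
  have hB0 : 0 ≤ B := nonneg_of_mul_nonneg_left
    ((mul_nonneg (norm_nonneg _) hw.le).trans (hB t t ht le_rfl)) (Real.exp_pos _)
  refine ⟨B * Real.exp (δ * t) / w t, fun s hts => (le_div_iff₀ hw).2 ?_⟩
  refine (hB t s ht hts.le).trans ?_
  have hδ := h.rate_pos
  gcongr
  linarith

lemma exists_norm_volterraKernel_le (h : IsVolterraPair w κ δ u b)
    (hX : ∀ t, 0 < t → ‖v t‖ ≤ X) :
    ∃ M, 0 ≤ M ∧ ∀ s t, 0 < t → t < s →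
      ‖volterraKernel w u b v s t‖ ≤ M * Real.exp (-(δ * (s - t))) := by
  obtain ⟨A, hA⟩ := h.norm_left_le
  obtain ⟨B, hB⟩ := h.norm_right_mul_weight_le
  have hbound (s t : ℝ) (ht : 0 < t) (hts : t < s) :
      ‖volterraKernel w u b v s t‖ ≤ 2 * A * B * X * Real.exp (-(δ * (s - t))) := by
    have hw := (h.weight_pos t ht).le
    have hs := ht.trans hts
    have hfirst : ‖u s‖ * (‖b t‖ * w t) ≤ A * B * Real.exp (-(δ * (s - t))) :=
      (mul_le_mul (hA s hs) (hB t t ht le_rfl) (by positivity)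
        ((norm_nonneg _).trans (hA s hs))).trans_eq (by
          rw [mul_mul_mul_comm, ← Real.exp_add]; ring_nf)
    have hsecond : ‖u t‖ * (‖b s‖ * w t) ≤ A * B * Real.exp (-(δ * (s - t))) :=
      (mul_le_mul (hA t ht) (hB t s ht hts.le) (by positivity)
        ((norm_nonneg _).trans (hA t ht))).trans_eq (by
          rw [mul_mul_mul_comm, ← Real.exp_add]; ring_nf)
    calc ‖volterraKernel w u b v s t‖
        = ‖u s * b t - b s * u t‖ * w t * ‖v t‖ := by
          rw [volterraKernel, norm_mul, norm_mul, Complex.norm_real, Real.norm_of_nonneg hw]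
          ring
      _ ≤ (‖u s * b t‖ + ‖b s * u t‖) * w t * ‖v t‖ := by gcongr; exact norm_sub_le _ _
      _ = (‖u s‖ * (‖b t‖ * w t) + ‖u t‖ * (‖b s‖ * w t)) * ‖v t‖ := by
          simp only [norm_mul]; ring
      _ ≤ (A * B * Real.exp (-(δ * (s - t))) + A * B * Real.exp (-(δ * (s - t)))) * X :=
          mul_le_mul (add_le_add hfirst hsecond) (hX t ht) (norm_nonneg _)
            (add_nonneg ((by positivity : (0 : ℝ) ≤ _).trans hfirst)
              ((by positivity : (0 : ℝ) ≤ _).trans hsecond))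
      _ = 2 * A * B * X * Real.exp (-(δ * (s - t))) := by ring
  exact ⟨2 * A * B * X, nonneg_of_mul_nonneg_left ((norm_nonneg _).trans
    (hbound 2 1 one_pos one_lt_two)) (Real.exp_pos _), hbound⟩

lemma exists_integral_norm_volterraKernel_le (h : IsVolterraPair w κ δ u b)
    (hv : ContinuousOn v (Ioi 0)) (hX : ∀ t, 0 < t → ‖v t‖ ≤ X) :
    ∃ C, ∀ s, IntegrableOn (volterraKernel w u b v s) (Ioo 0 s) ∧
      ∫ t in Ioo 0 s, ‖volterraKernel w u b v s t‖ ≤ C := by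
  obtain ⟨M, hM, hle⟩ := h.exists_norm_volterraKernel_le hX
  have hcont (s : ℝ) : ContinuousOn (volterraKernel w u b v s) (Ioi 0) :=
    (((continuousOn_const.mul h.isSol_right.continuousOn).sub
      (continuousOn_const.mul h.isSol_left.continuousOn)).mul hv).mul
      (Complex.continuous_ofReal.comp_continuousOn h.continuousOn_weight)
  exact ⟨M / δ, fun s => integrableOn_Ioo_and_integral_norm_le hM h.rate_pos
    ((hcont s).mono Ioo_subset_Ioi_self) fun t ht => hle s t ht.1 ht.2⟩

-- Green's identity on `(0, s)`: the boundary term at `s` is `v s · W(b, u) = v s`, and the one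
-- at `0` is `u s · W(b, v) - b s · W(u, v) → u s`.
lemma integral_volterraKernel (h : IsVolterraPair w κ δ u b) (hv : IsSturmLiouvilleSol w ν v)
    (hX : ∀ t, 0 < t → ‖v t‖ ≤ X) (hνκ : ν ≠ κ)
    (hbu : Tendsto (wronskian w b u) (𝓝[>] 0) (𝓝 1))
    (hbv : Tendsto (wronskian w b v) (𝓝[>] 0) (𝓝 1))
    (huv : Tendsto (wronskian w u v) (𝓝[>] 0) (𝓝 0)) {s : ℝ} (hs : 0 < s) :
    ∫ t in Ioo 0 s, volterraKernel w u b v s t = (v s - u s) / (ν - κ) := by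
  obtain ⟨C, hC⟩ := h.exists_integral_norm_volterraKernel_le hv.continuousOn hX
  have hderiv (t : ℝ) (ht : 0 < t) :
      HasDerivAt (fun t => u s * wronskian w b v t - b s * wronskian w u v t)
        ((ν - κ) * volterraKernel w u b v s t) t :=
    (((h.isSol_right.hasDerivAt_wronskian hv ht).const_mul (u s)).sub
      ((h.isSol_left.hasDerivAt_wronskian hv ht).const_mul (b s))).congr_deriv (by
        rw [volterraKernel]; ring)
  have hgreen := intervalIntegral.integral_eq_sub_of_hasDerivAt_of_tendsto hs
    (fun t ht => hderiv t ht.1)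
    ((intervalIntegrable_iff_integrableOn_Ioo_of_le hs.le).2 ((hC s).1.const_mul _))
    ((hbv.const_mul (u s)).sub (huv.const_mul (b s)))
    ((hderiv s hs).continuousAt.tendsto.mono_left nhdsWithin_le_nhds)
  rw [intervalIntegral.integral_of_le hs.le, integral_Ioc_eq_integral_Ioo, integral_const_mul]
    at hgreen
  have hboundary : u s * wronskian w b v s - b s * wronskian w u v s = v s := by
    have hone := h.isSol_right.wronskian_eq_of_tendsto h.isSol_left hbu hs
    simp only [wronskian] at hone ⊢
    linear_combination v s * hone
  rw [eq_div_iff (sub_ne_zero.2 hνκ)]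
  linear_combination hgreen + hboundary

lemma integral_Ioi_volterraKernel (h : IsVolterraPair w κ δ u b)
    (hf : IntegrableOn (fun s => f s * w s) (Ioi 0)) {t : ℝ} (ht : 0 < t) :
    ∫ s in Ioi t, f s * w s * volterraKernel w u b v s t =
      volterraOperator w u b f t * v t * w t := by
  obtain ⟨A, hA⟩ := h.exists_norm_left_le
  obtain ⟨B, hB⟩ := h.exists_norm_right_le ht
  have hsub : Ioi t ⊆ Ioi 0 := Ioi_subset_Ioi ht.le
  have hu := integrableOn_mul_mul_weight (hf.mono_set hsub)
    (h.isSol_left.continuousOn.mono hsub) fun s hs => hA s (ht.trans hs)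
  have hb := integrableOn_mul_mul_weight (hf.mono_set hsub)
    (h.isSol_right.continuousOn.mono hsub) hB
  calc ∫ s in Ioi t, f s * w s * volterraKernel w u b v s t
      = ∫ s in Ioi t, (b t * (f s * u s * w s) - u t * (f s * b s * w s)) * (v t * w t) := by
        congr 1 with s
        rw [volterraKernel]
        ring
    _ = volterraOperator w u b f t * v t * w t := by
        rw [integral_mul_const, integral_sub (hu.const_mul _) (hb.const_mul _),
          integral_const_mul, integral_const_mul, volterraOperator, mul_assoc]

lemma aestronglyMeasurable_volterraKernel (h : IsVolterraPair w κ δ u b)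
    (hv : ContinuousOn v (Ioi 0)) :
    AEStronglyMeasurable (fun p : ℝ × ℝ => volterraKernel w u b v p.2 p.1)
      ((volume.restrict (Ioi 0)).prod (volume.restrict (Ioi 0))) := by
  have hu := h.isSol_left.continuousOn.aestronglyMeasurable (μ := volume) measurableSet_Ioi
  have hb := h.isSol_right.continuousOn.aestronglyMeasurable (μ := volume) measurableSet_Ioi
  have hw := (Complex.continuous_ofReal.comp_continuousOn
    h.continuousOn_weight).aestronglyMeasurable (μ := volume) measurableSet_Ioi
  exact (((hu.comp_snd.mul hb.comp_fst).sub (hb.comp_snd.mul hu.comp_fst)).mul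
    (hv.aestronglyMeasurable measurableSet_Ioi).comp_fst).mul hw.comp_fst

theorem integral_volterraOperator_mul (h : IsVolterraPair w κ δ u b)
    (hv : IsSturmLiouvilleSol w ν v) (hX : ∀ t, 0 < t → ‖v t‖ ≤ X) (hνκ : ν ≠ κ)
    (hbu : Tendsto (wronskian w b u) (𝓝[>] 0) (𝓝 1))
    (hbv : Tendsto (wronskian w b v) (𝓝[>] 0) (𝓝 1))
    (huv : Tendsto (wronskian w u v) (𝓝[>] 0) (𝓝 0))
    (hf : IntegrableOn (fun s => f s * w s) (Ioi 0)) :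
    IntegrableOn (fun t => volterraOperator w u b f t * v t * w t) (Ioi 0) ∧
      ∫ t in Ioi 0, volterraOperator w u b f t * v t * w t =
        ((∫ s in Ioi 0, f s * v s * w s) - ∫ s in Ioi 0, f s * u s * w s) / (ν - κ) := by
  obtain ⟨A, hA⟩ := h.exists_norm_left_le
  obtain ⟨C, hC⟩ := h.exists_integral_norm_volterraKernel_le hv.continuousOn hX
  obtain ⟨hint, hfubini⟩ := integral_integral_Ioi_mul
    (h.aestronglyMeasurable_volterraKernel hv.continuousOn) (fun s _ => (hC s).1)
    (fun s _ => (hC s).2) hf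
  have hinner : ∀ t ∈ Ioi (0 : ℝ), ∫ s in Ioi t, f s * w s * volterraKernel w u b v s t =
      volterraOperator w u b f t * v t * w t := fun t ht => h.integral_Ioi_volterraKernel hf ht
  refine ⟨hint.congr_fun hinner measurableSet_Ioi, ?_⟩
  rw [← setIntegral_congr_fun measurableSet_Ioi hinner, hfubini,
    ← integral_sub (integrableOn_mul_mul_weight hf hv.continuousOn hX)
      (integrableOn_mul_mul_weight hf h.isSol_left.continuousOn hA), ← integral_div]
  refine setIntegral_congr_fun measurableSet_Ioi fun s hs => ?_
  simp only [h.integral_volterraKernel hv hX hνκ hbu hbv huv hs]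
  ring

end IsVolterraPair

end SturmLiouville

section HyperbolicFunctions

lemma one_sub_tanh_sq (t : ℝ) : 1 - Real.tanh t ^ 2 = (Real.cosh t ^ 2)⁻¹ := by
  have hcosh := (Real.cosh_pos t).ne'
  rw [Real.tanh_eq_sinh_div_cosh]
  field_simp
  linarith [Real.cosh_sq t]

lemma hasDerivAt_tanh (t : ℝ) : HasDerivAt Real.tanh (1 - Real.tanh t ^ 2) t := by
  have hcosh := (Real.cosh_pos t).ne'
  rw [funext Real.tanh_eq_sinh_div_cosh]
  refine ((Real.hasDerivAt_sinh t).fun_div (Real.hasDerivAt_cosh t) hcosh).congr_deriv ?_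
  field_simp

lemma continuous_tanh : Continuous Real.tanh :=
  continuous_iff_continuousAt.2 fun t => (hasDerivAt_tanh t).continuousAt

lemma tanh_pos {t : ℝ} (ht : 0 < t) : 0 < Real.tanh t := by
  rw [Real.tanh_eq_sinh_div_cosh]
  exact div_pos (Real.sinh_pos_iff.2 ht) (Real.cosh_pos t)

lemma tanh_sq_mem_Ioo {t : ℝ} (ht : 0 < t) : Real.tanh t ^ 2 ∈ Ioo (0 : ℝ) 1 :=
  ⟨pow_pos (tanh_pos ht) 2, Real.tanh_sq_lt_one t⟩

lemma cosh_le_exp {t : ℝ} (ht : 0 < t) : Real.cosh t ≤ Real.exp t := by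
  rw [Real.cosh_eq]
  linarith [Real.exp_le_exp.2 (show -t ≤ t by linarith)]

lemma exp_div_two_le_cosh (t : ℝ) : Real.exp t / 2 ≤ Real.cosh t := by
  rw [Real.cosh_eq]
  linarith [Real.exp_pos (-t)]

lemma sinh_le_exp_neg_sub_mul_sinh {s t : ℝ} (hts : t ≤ s) :
    Real.sinh t ≤ Real.exp (-(s - t)) * Real.sinh s := by
  rw [Real.sinh_eq, Real.sinh_eq, mul_div_assoc', mul_sub, ← Real.exp_add, ← Real.exp_add,
    show -(s - t) + s = t by ring]
  linarith [Real.exp_le_exp.2 (show -(s - t) + -s ≤ -t by linarith)]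

lemma cosh_le_two_mul_exp_neg_sub_mul_cosh {s t : ℝ} (ht : 0 < t) :
    Real.cosh t ≤ 2 * Real.exp (-(s - t)) * Real.cosh s :=
  calc Real.cosh t ≤ Real.exp t := cosh_le_exp ht
    _ = 2 * Real.exp (-(s - t)) * (Real.exp s / 2) := by
      rw [show t = -(s - t) + s by ring, Real.exp_add]
      ring_nf
    _ ≤ 2 * Real.exp (-(s - t)) * Real.cosh s := by gcongr; exact exp_div_two_le_cosh s

lemma cosh_rpow_le_exp {t p : ℝ} (ht : 0 < t) (hp : 0 ≤ p) :
    Real.cosh t ^ p ≤ Real.exp (p * t) := by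
  rw [mul_comm, Real.exp_mul]
  exact Real.rpow_le_rpow (Real.cosh_pos t).le (cosh_le_exp ht) hp

lemma cosh_rpow_neg_le_exp (t : ℝ) {p : ℝ} (hp : 0 ≤ p) :
    Real.cosh t ^ (-p) ≤ 2 ^ p * Real.exp (-(p * t)) :=
  calc Real.cosh t ^ (-p) ≤ (Real.exp t / 2) ^ (-p) :=
        Real.rpow_le_rpow_of_nonpos (by positivity) (exp_div_two_le_cosh t) (neg_nonpos.2 hp)
    _ = 2 ^ p * Real.exp (-(p * t)) := by
        rw [Real.div_rpow (Real.exp_pos t).le zero_le_two, ← Real.exp_mul,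
          Real.rpow_neg zero_le_two, div_inv_eq_mul, mul_comm, mul_neg, mul_comm t]

lemma hasDerivAt_cosh_cpow (β : ℂ) (t : ℝ) :
    HasDerivAt (fun t : ℝ => (Real.cosh t : ℂ) ^ β)
      (β * Real.tanh t * (Real.cosh t : ℂ) ^ β) t := by
  have hcosh : (Real.cosh t : ℂ) ≠ 0 := ofReal_ne_zero.2 (Real.cosh_pos t).ne'
  have h := ((hasDerivAt_id (Real.cosh t : ℂ)).cpow_const (c := β)
    (ofReal_mem_slitPlane.2 (Real.cosh_pos t))).scomp t (Real.hasDerivAt_cosh t).ofReal_comp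
  refine h.congr_deriv ?_
  rw [id_eq, cpow_sub _ _ hcosh, cpow_one, Real.tanh_eq_sinh_div_cosh, smul_eq_mul, ofReal_div]
  field_simp

end HyperbolicFunctions

section JacobiWeight

variable (m₁ m₂ : ℕ)

lemma ofReal_rho : (rho m₁ m₂ : ℂ) = ((m₁ : ℂ) + 2 * m₂) / 2 := by
  simp [rho]

lemma Del_eq_tanh_pow_mul_cosh_pow (t : ℝ) :
    Del m₁ m₂ t =
      2 ^ (m₁ + 2 * m₂) * Real.tanh t ^ (m₁ + m₂) * Real.cosh t ^ (m₁ + 2 * m₂) := by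
  have hsinh : Real.sinh t = Real.tanh t * Real.cosh t := by
    rw [Real.tanh_eq_sinh_div_cosh, div_mul_cancel₀ _ (Real.cosh_pos t).ne']
  rw [Del, hsinh]
  ring

variable {m₁ m₂}

lemma Del_pos {t : ℝ} (ht : 0 < t) : 0 < Del m₁ m₂ t := by
  have := Real.sinh_pos_iff.2 ht
  have := Real.cosh_pos t
  unfold Del
  positivity

lemma continuous_Del : Continuous (Del m₁ m₂) := by
  unfold Del
  fun_prop

lemma tendsto_Del_zero (hm : 0 < m₁ + m₂) :
    Filter.Tendsto (fun t => (Del m₁ m₂ t : ℂ)) (nhdsWithin 0 (Ioi 0)) (nhds 0) := by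
  have h := ((continuous_ofReal.comp (continuous_Del (m₁ := m₁) (m₂ := m₂))).tendsto 0).mono_left
    (nhdsWithin_le_nhds (s := Ioi 0))
  have hzero : Del m₁ m₂ 0 = 0 := by
    rw [Del, Real.sinh_zero, mul_zero, zero_pow hm.ne', zero_mul]
  simpa only [Function.comp_def, hzero, ofReal_zero] using h

lemma hasDerivAt_Del {t : ℝ} (ht : 0 < t) :
    HasDerivAt (Del m₁ m₂)
      ((((m₁ : ℝ) + m₂) / Real.tanh t + m₂ * Real.tanh t) * Del m₁ m₂ t) t := by
  have := Real.sinh_pos_iff.2 ht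
  have := Real.cosh_pos t
  have hpow (k : ℕ) {y : ℝ} (hy : y ≠ 0) : (k : ℝ) * y ^ (k - 1) = k * y ^ k / y := by
    rcases k with _ | k
    · simp
    · rw [Nat.add_sub_cancel, pow_succ, mul_div_assoc, mul_div_cancel_right₀ _ hy]
  refine ((((Real.hasDerivAt_sinh t).const_mul 2).pow (m₁ + m₂)).mul
    (((Real.hasDerivAt_cosh t).const_mul 2).pow m₂)).congr_deriv ?_
  simp only [Pi.pow_apply]
  rw [hpow _ (by positivity), hpow _ (by positivity), Del, Real.tanh_eq_sinh_div_cosh]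
  push_cast
  field_simp

lemma Del_le_exp_mul_Del {s t : ℝ} (ht : 0 < t) (hts : t ≤ s) :
    Del m₁ m₂ t ≤ 2 ^ m₂ * Real.exp (-(2 * rho m₁ m₂ * (s - t))) * Del m₁ m₂ s := by
  have := Real.sinh_pos_iff.2 ht
  have := Real.sinh_pos_iff.2 (ht.trans_le hts)
  have := Real.cosh_pos t
  have hexp : Real.exp (-(2 * rho m₁ m₂ * (s - t))) = Real.exp (-(s - t)) ^ (m₁ + 2 * m₂) := by
    rw [← Real.exp_nat_mul, rho]
    push_cast
    ring_nf
  calc Del m₁ m₂ t ≤ (2 * (Real.exp (-(s - t)) * Real.sinh s)) ^ (m₁ + m₂) *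
        (2 * (2 * Real.exp (-(s - t)) * Real.cosh s)) ^ m₂ := by
        unfold Del
        gcongr
        · exact sinh_le_exp_neg_sub_mul_sinh hts
        · exact cosh_le_two_mul_exp_neg_sub_mul_cosh ht
    _ = 2 ^ m₂ * Real.exp (-(2 * rho m₁ m₂ * (s - t))) * Del m₁ m₂ s := by
        rw [hexp, Del]
        simp only [mul_pow]
        ring

end JacobiWeight

section RadialLift

open Filter Topology

/-- Solutions on `(0, 1)` of Gauss's hypergeometric differential equation with parameters
`a`, `b`, `c`. -/
structure IsHypergeometricSol (a b c : ℂ) (G : ℂ → ℂ) : Prop where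
  differentiableAt : ∀ x ∈ Ioo (0 : ℝ) 1, DifferentiableAt ℂ G x
  differentiableAt_deriv : ∀ x ∈ Ioo (0 : ℝ) 1, DifferentiableAt ℂ (deriv G) x
  differential_equation : ∀ x ∈ Ioo (0 : ℝ) 1,
    (x : ℂ) * (1 - x) * deriv (deriv G) x + (c - (a + b + 1) * x) * deriv G x = a * b * G x

lemma isHypergeometricSol_hyp (a b : ℂ) {c : ℂ} (hc : ∀ k : ℕ, c ≠ -k) :
    IsHypergeometricSol a b c (hyp a b c) := by
  have hnorm : ∀ x ∈ Ioo (0 : ℝ) 1, ‖(x : ℂ)‖ < 1 := fun x hx => by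
    rw [norm_real, Real.norm_of_nonneg hx.1.le]
    exact hx.2
  refine ⟨fun x hx => differentiableAt_hyp a b hc (hnorm x hx), fun x hx => ?_,
    fun x hx => hyp_differential_equation a b hc (hnorm x hx)⟩
  refine DifferentiableAt.congr_of_eventuallyEq ?_ (deriv_hyp_eventuallyEq a b hc (hnorm x hx))
  exact (differentiableAt_hyp _ _ (ne_neg_natCast_add_one hc) (hnorm x hx)).const_mul _

lemma IsHypergeometricSol.comp_one_sub {a b c : ℂ} {G : ℂ → ℂ}
    (hG : IsHypergeometricSol a b c G) :
    IsHypergeometricSol a b (a + b + 1 - c) (fun x => G (1 - x)) := by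
  have hmem {x : ℝ} (hx : x ∈ Ioo (0 : ℝ) 1) : 1 - x ∈ Ioo (0 : ℝ) 1 :=
    ⟨by linarith [hx.2], by linarith [hx.1]⟩
  have hcast (x : ℝ) : ((1 - x : ℝ) : ℂ) = 1 - x := by push_cast; rfl
  have hsub (x : ℂ) : DifferentiableAt ℂ (fun x : ℂ => 1 - x) x := by fun_prop
  have hderiv : deriv (fun x => G (1 - x)) = fun x => -deriv G (1 - x) :=
    funext fun x => deriv_comp_const_sub G 1 x
  refine ⟨fun x hx => ?_, fun x hx => ?_, fun x hx => ?_⟩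
  · exact (hcast x ▸ hG.differentiableAt _ (hmem hx)).comp (x : ℂ) (hsub x)
  · rw [hderiv]
    exact ((hcast x ▸ hG.differentiableAt_deriv _ (hmem hx)).comp (x : ℂ) (hsub x)).neg
  · have h := hG.differential_equation _ (hmem hx)
    rw [hcast] at h
    rw [hderiv, deriv.fun_neg, deriv_comp_const_sub]
    linear_combination h

/-- The function `cosh ^ (-α) * G (tanh²)` of the radial variable; the substitution `x = tanh² t`
turns the hypergeometric equation into the radial Sturm–Liouville equation with weight `Del`. -/
def radialLift (α : ℂ) (G : ℂ → ℂ) (t : ℝ) : ℂ :=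
  (Real.cosh t : ℂ) ^ (-α) * G ((Real.tanh t ^ 2 : ℝ) : ℂ)

variable {m₁ m₂ : ℕ} {α : ℂ} {G : ℂ → ℂ}

lemma hasDerivAt_radialLift {t : ℝ} (hG : DifferentiableAt ℂ G ((Real.tanh t ^ 2 : ℝ) : ℂ)) :
    HasDerivAt (radialLift α G) (Real.tanh t *
      (2 * (1 - (Real.tanh t : ℂ) ^ 2) * radialLift α (deriv G) t - α * radialLift α G t)) t := by
  have hcomp := hG.hasDerivAt.comp_ofReal.scomp t ((hasDerivAt_tanh t).pow 2)
  refine ((hasDerivAt_cosh_cpow (-α) t).mul hcomp).congr_deriv ?_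
  simp only [Function.comp_apply, Pi.pow_apply, real_smul, radialLift]
  push_cast
  ring

lemma isSturmLiouvilleSol_radialLift
    (hG : IsHypergeometricSol (α / 2) ((α + 1 - m₂) / 2) (((m₁ : ℂ) + m₂ + 1) / 2) G) :
    IsSturmLiouvilleSol (Del m₁ m₂) (α * (α - 2 * rho m₁ m₂)) (radialLift α G) := by
  have hderiv {t : ℝ} (ht : 0 < t) :=
    hasDerivAt_radialLift (α := α) (hG.differentiableAt _ (tanh_sq_mem_Ioo ht))
  refine .of_hasDerivAt (fun t ht => hderiv ht) fun t ht => ?_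
  have hx := tanh_sq_mem_Ioo ht
  have htanh := (hasDerivAt_tanh t).ofReal_comp
  have hflux := (hasDerivAt_Del (m₁ := m₁) (m₂ := m₂) ht).ofReal_comp.mul <| htanh.mul <|
    ((((htanh.pow 2).const_sub 1).const_mul 2).mul
      (hasDerivAt_radialLift (α := α) (hG.differentiableAt_deriv _ hx))).sub
    ((hderiv ht).const_mul α)
  refine hflux.congr_deriv ?_
  have hode := hG.differential_equation _ hx
  have hquot : ((m₁ : ℂ) + m₂) / Real.tanh t * Real.tanh t = m₁ + m₂ :=
    div_mul_cancel₀ _ (ofReal_ne_zero.2 (tanh_pos ht).ne')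
  simp only [Pi.mul_apply, Pi.sub_apply, Pi.pow_apply, radialLift, ofReal_rho]
  simp only [ofReal_mul, ofReal_add, ofReal_sub, ofReal_div, ofReal_pow, ofReal_one,
    ofReal_natCast, Nat.cast_ofNat] at hode ⊢
  linear_combination 4 * (1 - (Real.tanh t : ℂ) ^ 2) * Del m₁ m₂ t *
    (Real.cosh t : ℂ) ^ (-α) * hode + Del m₁ m₂ t * (Real.cosh t : ℂ) ^ (-α) *
    (2 * (1 - (Real.tanh t : ℂ) ^ 2) * deriv G ((Real.tanh t : ℂ) ^ 2) -
      α * G ((Real.tanh t : ℂ) ^ 2)) * hquot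

lemma norm_cosh_cpow (β : ℂ) (t : ℝ) : ‖(Real.cosh t : ℂ) ^ β‖ = Real.cosh t ^ β.re :=
  norm_cpow_eq_rpow_re_of_pos (Real.cosh_pos t) β

lemma norm_radialLift_le {C s : ℝ}
    (hG : ∀ x ∈ Ico (0 : ℝ) 1, ‖G x‖ ≤ C * ((1 - x) ^ s)⁻¹) (t : ℝ) :
    ‖radialLift α G t‖ ≤ C * Real.cosh t ^ (2 * s - α.re) := by
  have hcosh := Real.cosh_pos t
  have hpow : ((1 - Real.tanh t ^ 2) ^ s)⁻¹ = Real.cosh t ^ (2 * s) := by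
    rw [one_sub_tanh_sq, Real.inv_rpow (sq_nonneg _), inv_inv, Real.rpow_mul hcosh.le,
      Real.rpow_two]
  calc ‖radialLift α G t‖ = Real.cosh t ^ (-α.re) * ‖G ((Real.tanh t ^ 2 : ℝ) : ℂ)‖ := by
        rw [radialLift, norm_mul, norm_cosh_cpow, neg_re]
    _ ≤ Real.cosh t ^ (-α.re) * (C * Real.cosh t ^ (2 * s)) := by
        gcongr
        exact hpow ▸ hG _ ⟨sq_nonneg _, Real.tanh_sq_lt_one t⟩
    _ = C * Real.cosh t ^ (2 * s - α.re) := by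
        rw [mul_left_comm, ← Real.rpow_add hcosh, neg_add_eq_sub]

lemma tendsto_radialLift_zero (hG : ContinuousAt G 0) :
    Tendsto (radialLift α G) (𝓝[>] 0) (𝓝 (G 0)) := by
  have hlift : ContinuousAt (radialLift α G) 0 :=
    (hasDerivAt_cosh_cpow (-α) 0).continuousAt.mul <|
      ContinuousAt.comp (f := fun t : ℝ => ((Real.tanh t ^ 2 : ℝ) : ℂ)) (by simpa using hG)
        (continuous_ofReal.comp (continuous_tanh.pow 2)).continuousAt
  have h := hlift.tendsto.mono_left (nhdsWithin_le_nhds (s := Ioi 0))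
  simpa [radialLift] using h

lemma tendsto_ofReal_tanh_zero : Tendsto (fun t => (Real.tanh t : ℂ)) (𝓝[>] 0) (𝓝 0) := by
  have h := (continuous_ofReal.comp continuous_tanh).tendsto 0
  rw [Function.comp_apply, Real.tanh_zero, ofReal_zero] at h
  exact h.mono_left nhdsWithin_le_nhds

lemma tendsto_deriv_radialLift_zero (hG : AnalyticAt ℂ G 0) :
    Tendsto (deriv (radialLift α G)) (𝓝[>] 0) (𝓝 0) := by
  have hdiff : ∀ᶠ t : ℝ in 𝓝[>] 0, DifferentiableAt ℂ G ((Real.tanh t ^ 2 : ℝ) : ℂ) := by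
    have h := tendsto_ofReal_tanh_zero.pow 2
    rw [zero_pow two_ne_zero] at h
    simpa only [ofReal_pow] using
      h.eventually (Complex.analyticAt_iff_eventually_differentiableAt.1 hG)
  have h := tendsto_ofReal_tanh_zero.mul <|
    ((((tendsto_ofReal_tanh_zero.pow 2).const_sub 1).const_mul 2).mul
      (tendsto_radialLift_zero (α := α) hG.deriv.continuousAt)).sub
    ((tendsto_radialLift_zero (α := α) hG.continuousAt).const_mul α)
  rw [zero_mul] at h
  refine h.congr' ?_
  filter_upwards [hdiff] with t ht using (hasDerivAt_radialLift ht).deriv.symm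

end RadialLift

section JacobiFunctions

open Filter Topology

variable {m₁ m₂ : ℕ} {α : ℂ}

lemma ne_neg_natCast_of_re_pos {c : ℂ} (hc : 0 < c.re) (k : ℕ) : c ≠ -k := by
  rintro rfl
  rw [neg_re, natCast_re] at hc
  linarith [k.cast_nonneg (α := ℝ)]

variable (m₁ m₂) in
lemma ofReal_add_one_div_two : ((((m₁ + m₂ + 1 : ℕ) : ℝ) / 2 : ℝ) : ℂ) =
    ((m₁ : ℂ) + m₂ + 1) / 2 := by
  push_cast
  rfl

lemma natCast_add_one_div_two_ne_neg (k : ℕ) : ((m₁ : ℂ) + m₂ + 1) / 2 ≠ -k :=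
  ne_neg_natCast_of_re_pos (by rw [← ofReal_add_one_div_two, ofReal_re]; positivity) k

lemma natCast_add_pos_of_rho_pos (hρ : 0 < rho m₁ m₂) : 0 < m₁ + m₂ := by
  rw [Nat.pos_iff_ne_zero]
  intro h
  obtain ⟨rfl, rfl⟩ := Nat.add_eq_zero_iff.1 h
  simp [rho] at hρ

/-- The hypergeometric solution of the radial equation with eigenvalue `α * (α - 2 * ρ)` that is
regular at the origin; `sph m₁ m₂ l` is the case `α = ρ + i l`. -/
def jacobiFirst (m₁ m₂ : ℕ) (α : ℂ) : ℝ → ℂ :=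
  radialLift α (hyp (α / 2) ((α + 1 - m₂) / 2) (((m₁ : ℂ) + m₂ + 1) / 2))

lemma isSturmLiouvilleSol_jacobiFirst :
    IsSturmLiouvilleSol (Del m₁ m₂) (α * (α - 2 * rho m₁ m₂)) (jacobiFirst m₁ m₂ α) :=
  isSturmLiouvilleSol_radialLift (isHypergeometricSol_hyp _ _ natCast_add_one_div_two_ne_neg)

lemma analyticAt_hyp_zero (a b : ℂ) {c : ℂ} (hc : ∀ k : ℕ, c ≠ -k) :
    AnalyticAt ℂ (hyp a b c) 0 := by
  rw [Complex.analyticAt_iff_eventually_differentiableAt]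
  filter_upwards [Metric.ball_mem_nhds (0 : ℂ) one_pos] with x hx
  exact differentiableAt_hyp a b hc (mem_ball_zero_iff.1 hx)

lemma hyp_zero (a b c : ℂ) : hyp a b c 0 = 1 := by
  rw [hyp, tsum_eq_single 0 fun n hn => by rw [zero_pow hn, mul_zero]]
  simp

lemma tendsto_jacobiFirst_zero : Tendsto (jacobiFirst m₁ m₂ α) (𝓝[>] 0) (𝓝 1) := by
  have h := tendsto_radialLift_zero (α := α) (analyticAt_hyp_zero (α / 2) ((α + 1 - m₂) / 2)
    (natCast_add_one_div_two_ne_neg (m₁ := m₁) (m₂ := m₂))).continuousAt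
  rwa [hyp_zero] at h

lemma tendsto_deriv_jacobiFirst_zero :
    Tendsto (deriv (jacobiFirst m₁ m₂ α)) (𝓝[>] 0) (𝓝 0) :=
  tendsto_deriv_radialLift_zero (analyticAt_hyp_zero _ _ natCast_add_one_div_two_ne_neg)

lemma re_jacobiFirst_params :
    (α / 2 + (α + 1 - m₂) / 2 - ((m₁ : ℂ) + m₂ + 1) / 2).re = α.re - rho m₁ m₂ := by
  rw [show α / 2 + (α + 1 - m₂) / 2 - ((m₁ : ℂ) + m₂ + 1) / 2 = α - rho m₁ m₂ by
    rw [ofReal_rho]; ring, sub_re, ofReal_re]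

lemma exists_norm_jacobiFirst_le_cosh_rpow (hα : α.re < rho m₁ m₂) :
    ∃ C, ∀ t, ‖jacobiFirst m₁ m₂ α t‖ ≤ C * Real.cosh t ^ (-α.re) := by
  obtain ⟨C, hC⟩ := exists_norm_hyp_le (a := α / 2) (b := (α + 1 - m₂) / 2)
    (natCast_add_one_div_two_ne_neg (m₁ := m₁) (m₂ := m₂))
    (by rw [re_jacobiFirst_params]; linarith)
  refine ⟨C, fun t => ?_⟩
  have h := norm_radialLift_le (α := α) (s := 0)
    (fun x hx => by simpa only [Real.rpow_zero, inv_one, mul_one] using hC x hx) t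
  rwa [mul_zero, zero_sub] at h

lemma exists_norm_jacobiFirst_le (hρ : 0 < rho m₁ m₂) (hα : 0 ≤ α.re)
    (hα' : α.re ≤ 2 * rho m₁ m₂) : ∃ C, ∀ t, ‖jacobiFirst m₁ m₂ α t‖ ≤ C := by
  rcases lt_or_ge α.re (rho m₁ m₂) with hlt | hge
  · obtain ⟨C, hC⟩ := exists_norm_jacobiFirst_le_cosh_rpow hlt
    have hC₀ : 0 ≤ C := by simpa using (norm_nonneg _).trans (hC 0)
    exact ⟨C, fun t => (hC t).trans (mul_le_of_le_one_right hC₀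
      (Real.rpow_le_one_of_one_le_of_nonpos (Real.one_le_cosh t) (neg_nonpos.2 hα)))⟩
  · obtain ⟨C, -, hC⟩ := exists_norm_hyp_le_mul_rpow (α / 2) ((α + 1 - m₂) / 2)
      (natCast_add_one_div_two_ne_neg (m₁ := m₁) (m₂ := m₂)) (half_pos (hρ.trans_le hge))
      (by rw [re_jacobiFirst_params]; linarith)
    refine ⟨C, fun t => ?_⟩
    have h := norm_radialLift_le (α := α) hC t
    rwa [mul_div_cancel₀ _ two_ne_zero, sub_self, Real.rpow_zero, mul_one] at h

/-- The hypergeometric solution of the radial equation with eigenvalue `α * (α - 2 * ρ)` that is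
a multiple of a Frobenius solution at infinity; `bfun m₁ m₂ l` is a multiple of the case
`α = ρ - i l`. -/
def jacobiSecond (m₁ m₂ : ℕ) (α : ℂ) : ℝ → ℂ :=
  radialLift α fun x => hyp (α / 2) ((α + 1 - m₂) / 2) (α + 1 - rho m₁ m₂) (1 - x)

lemma isSturmLiouvilleSol_jacobiSecond (hα : ∀ k : ℕ, α + 1 - rho m₁ m₂ ≠ -k) :
    IsSturmLiouvilleSol (Del m₁ m₂) (α * (α - 2 * rho m₁ m₂)) (jacobiSecond m₁ m₂ α) := by
  refine isSturmLiouvilleSol_radialLift ?_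
  have h := (isHypergeometricSol_hyp (α / 2) ((α + 1 - m₂) / 2) hα).comp_one_sub
  rwa [show α / 2 + (α + 1 - m₂) / 2 + 1 - (α + 1 - rho m₁ m₂) = ((m₁ : ℂ) + m₂ + 1) / 2 by
    rw [ofReal_rho]; ring] at h

lemma tanh_sq_rpow_natCast_div_two {t : ℝ} (ht : 0 < t) (n : ℕ) :
    (Real.tanh t ^ 2) ^ ((n : ℝ) / 2) = Real.tanh t ^ n := by
  rw [← Real.rpow_natCast_mul (tanh_pos ht).le, Nat.cast_ofNat, mul_div_cancel₀ _ two_ne_zero,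
    Real.rpow_natCast]

lemma exists_norm_jacobiSecond_mul_Del_le (hm : 0 < m₁ + m₂)
    (hα : ∀ k : ℕ, α + 1 - rho m₁ m₂ ≠ -k) : ∃ C ≥ 0, ∀ t, 0 < t →
      ‖jacobiSecond m₁ m₂ α t‖ * Del m₁ m₂ t ≤ C * Real.cosh t ^ (2 * rho m₁ m₂ - α.re) := by
  obtain ⟨C, hC₀, hC⟩ := exists_norm_hyp_le_mul_rpow (α / 2) ((α + 1 - m₂) / 2) hα
    (s := ((m₁ + m₂ : ℕ) : ℝ) / 2) (by positivity) (by
      rw [show α / 2 + (α + 1 - m₂) / 2 - (α + 1 - rho m₁ m₂) =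
        (((m₁ + m₂ : ℕ) / 2 - 1 / 2 : ℝ) : ℂ) by rw [ofReal_rho]; push_cast; ring, ofReal_re]
      linarith)
  refine ⟨C * 2 ^ (m₁ + 2 * m₂), by positivity, fun t ht => ?_⟩
  have htanh := tanh_pos ht
  have hcosh := Real.cosh_pos t
  have hhyp : ‖hyp (α / 2) ((α + 1 - m₂) / 2) (α + 1 - rho m₁ m₂)
      (1 - (Real.tanh t ^ 2 : ℝ))‖ ≤ C * (Real.tanh t ^ (m₁ + m₂))⁻¹ := by
    have h := hC (1 - Real.tanh t ^ 2) ⟨by linarith [(tanh_sq_mem_Ioo ht).2],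
      by linarith [(tanh_sq_mem_Ioo ht).1]⟩
    rwa [sub_sub_cancel, tanh_sq_rpow_natCast_div_two ht, ofReal_sub, ofReal_one] at h
  have hrho : 2 * rho m₁ m₂ - α.re = -α.re + (m₁ + 2 * m₂ : ℕ) := by
    rw [rho]; push_cast; ring
  rw [jacobiSecond, radialLift, norm_mul, norm_cosh_cpow, neg_re, Del_eq_tanh_pow_mul_cosh_pow]
  calc _ ≤ Real.cosh t ^ (-α.re) * (C * (Real.tanh t ^ (m₁ + m₂))⁻¹) *
        (2 ^ (m₁ + 2 * m₂) * Real.tanh t ^ (m₁ + m₂) * Real.cosh t ^ (m₁ + 2 * m₂)) := by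
        gcongr
    _ = C * 2 ^ (m₁ + 2 * m₂) * (Real.cosh t ^ (-α.re) * Real.cosh t ^ (m₁ + 2 * m₂)) := by
        field_simp
    _ = C * 2 ^ (m₁ + 2 * m₂) * Real.cosh t ^ (2 * rho m₁ m₂ - α.re) := by
        rw [hrho, Real.rpow_add hcosh, Real.rpow_natCast]

lemma isBoundedUnder_norm_Del_mul_jacobiSecond (hm : 0 < m₁ + m₂)
    (hα : ∀ k : ℕ, α + 1 - rho m₁ m₂ ≠ -k) :
    IsBoundedUnder (· ≤ ·) (𝓝[>] 0) fun t => ‖(Del m₁ m₂ t : ℂ) * jacobiSecond m₁ m₂ α t‖ := by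
  obtain ⟨C, -, hC⟩ := exists_norm_jacobiSecond_mul_Del_le hm hα
  have hcont : ContinuousAt (fun t => C * Real.cosh t ^ (2 * rho m₁ m₂ - α.re)) 0 :=
    (Real.continuous_cosh.continuousAt.rpow_const (.inl (Real.cosh_pos 0).ne')).const_mul C
  refine (hcont.tendsto.mono_left nhdsWithin_le_nhds).isBoundedUnder_le.mono_le ?_
  filter_upwards [self_mem_nhdsWithin] with t ht
  rw [norm_mul, norm_real, Real.norm_of_nonneg (Del_pos ht).le, mul_comm]
  exact hC t ht

lemma tendsto_one_sub_tanh_sq : Tendsto (fun t => 1 - Real.tanh t ^ 2) (𝓝[>] 0) (𝓝[<] 1) := by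
  refine tendsto_nhdsWithin_iff.2 ⟨?_, ?_⟩
  · have h : Tendsto (fun t => 1 - Real.tanh t ^ 2) (𝓝 0) (𝓝 (1 - Real.tanh 0 ^ 2)) :=
      (continuous_const.sub (continuous_tanh.pow 2)).tendsto 0
    simpa using h.mono_left nhdsWithin_le_nhds
  · filter_upwards [self_mem_nhdsWithin] with t ht
    exact mem_Iio.2 (sub_lt_self 1 (tanh_sq_mem_Ioo ht).1)

lemma tendsto_tanh_pow_mul_deriv_hyp {a b c : ℂ} (hc : ∀ k : ℕ, c ≠ -k) {n : ℕ} (hn : 0 < n)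
    (habc : a + b + 1 - c = ((n / 2 : ℝ) : ℂ)) :
    Tendsto (fun t : ℝ =>
        (Real.tanh t : ℂ) ^ n * deriv (hyp a b c) (1 - ((Real.tanh t ^ 2 : ℝ) : ℂ)))
      (𝓝[>] 0) (𝓝 (Gamma c * Gamma (n / 2 : ℝ) / (Gamma a * Gamma b))) := by
  have hlim := ((tendsto_one_sub_rpow_mul_hyp (a := a + 1) (b := b + 1)
    (ne_neg_natCast_add_one hc) (show (0 : ℝ) < n / 2 by positivity)
    (by rw [← habc]; ring)).comp tendsto_one_sub_tanh_sq).const_mul (a * b / c)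
  refine (hlim.congr' ?_).trans_eq (congrArg 𝓝 ?_)
  · filter_upwards [self_mem_nhdsWithin] with t ht
    obtain ⟨hpos, hlt⟩ := tanh_sq_mem_Ioo ht
    have hnorm : ‖((1 - Real.tanh t ^ 2 : ℝ) : ℂ)‖ < 1 := by
      rw [norm_real, Real.norm_of_nonneg (by linarith)]
      linarith
    have hderiv := deriv_hyp a b hc hnorm
    rw [ofReal_sub, ofReal_one] at hderiv
    rw [hderiv, Function.comp_apply, sub_sub_cancel, tanh_sq_rpow_natCast_div_two ht, ofReal_pow,
      ofReal_sub, ofReal_one]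
    ring
  · have hc₀ : c ≠ 0 := by simpa using hc 0
    rw [Gamma_add_one c hc₀, div_eq_mul_inv _ (Gamma a * _), div_eq_mul_inv _ (Gamma (a + 1) * _),
      mul_inv, mul_inv, one_div_Gamma_eq_self_mul_one_div_Gamma_add_one a,
      one_div_Gamma_eq_self_mul_one_div_Gamma_add_one b]
    field_simp

/-- The limit of `-Del * deriv (jacobiSecond m₁ m₂ α)` at `0`. -/
def jacobiSecondFlux (m₁ m₂ : ℕ) (α : ℂ) : ℂ :=
  2 ^ (m₁ + 2 * m₂ + 1) * (Gamma (α + 1 - rho m₁ m₂) * Gamma (((m₁ : ℂ) + m₂ + 1) / 2) /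
    (Gamma (α / 2) * Gamma ((α + 1 - m₂) / 2)))

lemma jacobiSecondFlux_ne_zero (hρ : 0 < rho m₁ m₂) (hα : rho m₁ m₂ ≤ α.re) :
    jacobiSecondFlux m₁ m₂ α ≠ 0 := by
  have hm₁ : (0 : ℝ) ≤ m₁ := m₁.cast_nonneg
  have hm₂ : (0 : ℝ) ≤ m₂ := m₂.cast_nonneg
  refine mul_ne_zero (pow_ne_zero _ two_ne_zero) (div_ne_zero (mul_ne_zero ?_ ?_)
    (mul_ne_zero ?_ ?_)) <;> refine Gamma_ne_zero_of_re_pos ?_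
  · simp only [add_re, sub_re, one_re, ofReal_re]
    linarith
  · rw [← ofReal_add_one_div_two, ofReal_re]
    positivity
  · rw [div_ofNat_re]
    linarith
  · rw [rho] at hα
    simp only [div_ofNat_re, add_re, sub_re, one_re, natCast_re]
    linarith

lemma Del_mul_deriv_jacobiSecond (hα : ∀ k : ℕ, α + 1 - rho m₁ m₂ ≠ -k) {t : ℝ} (ht : 0 < t) :
    (Del m₁ m₂ t : ℂ) * deriv (jacobiSecond m₁ m₂ α) t =
      -(2 ^ (m₁ + 2 * m₂ + 1) * (Real.cosh t : ℂ) ^ (m₁ + 2 * m₂) * (Real.cosh t : ℂ) ^ (-α) *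
        (1 - (Real.tanh t : ℂ) ^ 2)) * ((Real.tanh t : ℂ) ^ (m₁ + m₂ + 1) *
        deriv (hyp (α / 2) ((α + 1 - m₂) / 2) (α + 1 - rho m₁ m₂))
          (1 - ((Real.tanh t ^ 2 : ℝ) : ℂ))) -
      α * (Real.tanh t * (Del m₁ m₂ t * jacobiSecond m₁ m₂ α t)) := by
  have hG := (isHypergeometricSol_hyp (α / 2) ((α + 1 - m₂) / 2) hα).comp_one_sub
  have hderiv : deriv (jacobiSecond m₁ m₂ α) t = _ :=
    (hasDerivAt_radialLift (hG.differentiableAt _ (tanh_sq_mem_Ioo ht))).deriv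
  have hDel : (Del m₁ m₂ t : ℂ) = _ := congrArg ofReal (Del_eq_tanh_pow_mul_cosh_pow m₁ m₂ t)
  rw [hderiv, jacobiSecond, radialLift, radialLift, deriv_comp_const_sub, hDel]
  push_cast
  ring

lemma tendsto_Del_mul_deriv_jacobiSecond (hm : 0 < m₁ + m₂)
    (hα : ∀ k : ℕ, α + 1 - rho m₁ m₂ ≠ -k) :
    Tendsto (fun t => (Del m₁ m₂ t : ℂ) * deriv (jacobiSecond m₁ m₂ α) t) (𝓝[>] 0)
      (𝓝 (-jacobiSecondFlux m₁ m₂ α)) := by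
  have hcosh : Tendsto (fun t => (Real.cosh t : ℂ)) (𝓝[>] 0) (𝓝 1) := by
    have h := (continuous_ofReal.comp Real.continuous_cosh).tendsto 0
    rw [Function.comp_apply, Real.cosh_zero, ofReal_one] at h
    exact h.mono_left nhdsWithin_le_nhds
  have hcpow : Tendsto (fun t => (Real.cosh t : ℂ) ^ (-α)) (𝓝[>] 0) (𝓝 1) := by
    have h := (hasDerivAt_cosh_cpow (-α) 0).continuousAt.tendsto
    rw [Real.cosh_zero, ofReal_one, one_cpow] at h
    exact h.mono_left nhdsWithin_le_nhds
  have hsing := tendsto_tanh_pow_mul_deriv_hyp (a := α / 2) (b := (α + 1 - m₂) / 2) hα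
    (Nat.succ_pos (m₁ + m₂)) (by rw [ofReal_rho]; push_cast; ring)
  have hreg := tendsto_ofReal_tanh_zero.zero_mul_isBoundedUnder_le
    (isBoundedUnder_norm_Del_mul_jacobiSecond hm hα)
  have h := (((((hcosh.pow (m₁ + 2 * m₂)).const_mul (2 ^ (m₁ + 2 * m₂ + 1))).mul hcpow).mul
    ((tendsto_ofReal_tanh_zero.pow 2).const_sub 1)).neg.mul hsing).sub (hreg.const_mul α)
  refine (h.congr' ?_).trans_eq (congrArg 𝓝 ?_)
  · filter_upwards [self_mem_nhdsWithin] with t ht using (Del_mul_deriv_jacobiSecond hα ht).symm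
  · rw [jacobiSecondFlux, Nat.succ_eq_add_one, ofReal_add_one_div_two]
    simp only [one_pow, mul_one, ne_eq, OfNat.ofNat_ne_zero, not_false_eq_true, zero_pow, sub_zero,
      mul_zero, neg_mul]

end JacobiFunctions

section SphericalFunctions

open Filter Topology Asymptotics

variable {m₁ m₂ : ℕ} {l μ : ℂ}

lemma re_rho_add_I_mul : ((rho m₁ m₂ : ℂ) + I * l).re = rho m₁ m₂ - l.im := by
  simp [sub_eq_add_neg]

lemma re_rho_sub_I_mul : ((rho m₁ m₂ : ℂ) - I * l).re = rho m₁ m₂ + l.im := by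
  simp

lemma hyp_comm (a b c x : ℂ) : hyp a b c x = hyp b a c x := by
  simp only [hyp, mul_comm]

variable (m₁ m₂ l) in
lemma sph_eq_jacobiFirst : sph m₁ m₂ l = jacobiFirst m₁ m₂ (rho m₁ m₂ + I * l) := by
  funext t
  rw [sph, jacobiFirst, radialLift, hyp_comm]
  congr 2
  rw [ofReal_rho]
  ring

variable (m₁ m₂ l) in
lemma bfun_eq_jacobiSecond : bfun m₁ m₂ l = fun t =>
    (jacobiSecondFlux m₁ m₂ (rho m₁ m₂ - I * l))⁻¹ *
      jacobiSecond m₁ m₂ (rho m₁ m₂ - I * l) t := by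
  funext t
  have hpow : (2 : ℂ) ^ (-(rho m₁ m₂ : ℂ) - 1 - I * l) * 2 ^ (I * l - rho m₁ m₂) =
      (2 ^ (m₁ + 2 * m₂ + 1))⁻¹ := by
    rw [← cpow_add _ _ two_ne_zero, ← cpow_natCast, ← cpow_neg, ofReal_rho]
    congr 1
    push_cast
    ring
  have hparam : ((m₁ : ℂ) + 2) / 4 - I * l / 2 = ((rho m₁ m₂ : ℂ) - I * l + 1 - m₂) / 2 := by
    rw [ofReal_rho]
    ring
  have hsum : (rho m₁ m₂ : ℂ) - I * l + 1 - rho m₁ m₂ = 1 - I * l := by ring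
  have harg : (1 : ℂ) - (Real.tanh t ^ 2 : ℝ) = (((Real.cosh t ^ 2 : ℝ)) : ℂ)⁻¹ := by
    rw [← ofReal_one, ← ofReal_sub, one_sub_tanh_sq, ofReal_inv]
  rw [bfun, Phi, jacobiSecond, radialLift, jacobiSecondFlux, hsum, harg, hparam, ofReal_mul,
    mul_cpow_ofReal_nonneg zero_le_two (Real.cosh_pos t).le, mul_inv, inv_div, ← hpow, neg_sub,
    ofReal_ofNat, mul_comm (Gamma (1 - I * l))]
  ring

lemma isSturmLiouvilleSol_sph :
    IsSturmLiouvilleSol (Del m₁ m₂) (-(l ^ 2 + rho m₁ m₂ ^ 2)) (sph m₁ m₂ l) := by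
  rw [sph_eq_jacobiFirst]
  convert isSturmLiouvilleSol_jacobiFirst (m₁ := m₁) (m₂ := m₂) (α := rho m₁ m₂ + I * l) using 1
  linear_combination -l ^ 2 * I_sq

lemma tendsto_sph_zero : Tendsto (sph m₁ m₂ l) (𝓝[>] 0) (𝓝 1) :=
  sph_eq_jacobiFirst m₁ m₂ l ▸ tendsto_jacobiFirst_zero

lemma tendsto_deriv_sph_zero : Tendsto (deriv (sph m₁ m₂ l)) (𝓝[>] 0) (𝓝 0) :=
  sph_eq_jacobiFirst m₁ m₂ l ▸ tendsto_deriv_jacobiFirst_zero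

lemma exists_norm_sph_le (hρ : 0 < rho m₁ m₂) (hμ : |μ.im| ≤ rho m₁ m₂) :
    ∃ C, ∀ t, ‖sph m₁ m₂ μ t‖ ≤ C := by
  rw [sph_eq_jacobiFirst]
  obtain ⟨hlow, hhigh⟩ := abs_le.1 hμ
  refine exists_norm_jacobiFirst_le hρ ?_ ?_ <;> rw [re_rho_add_I_mul] <;> linarith

lemma exists_norm_sph_le_exp (hl : 0 < l.im) (hl' : l.im ≤ rho m₁ m₂) :
    ∃ C, ∀ t, ‖sph m₁ m₂ l t‖ ≤ C * Real.exp (-((rho m₁ m₂ - l.im) * t)) := by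
  rw [sph_eq_jacobiFirst]
  obtain ⟨C, hC⟩ := exists_norm_jacobiFirst_le_cosh_rpow (m₁ := m₁) (m₂ := m₂)
    (α := rho m₁ m₂ + I * l) (by rw [re_rho_add_I_mul]; linarith)
  rw [re_rho_add_I_mul] at hC
  have hC₀ : 0 ≤ C := by simpa using (norm_nonneg _).trans (hC 0)
  refine ⟨C * 2 ^ (rho m₁ m₂ - l.im), fun t => (hC t).trans ?_⟩
  rw [mul_assoc]
  exact mul_le_mul_of_nonneg_left (cosh_rpow_neg_le_exp t (sub_nonneg.2 hl')) hC₀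

lemma rho_sub_I_mul_add_one_ne_neg (hl : 0 ≤ l.im) (k : ℕ) :
    (rho m₁ m₂ : ℂ) - I * l + 1 - rho m₁ m₂ ≠ -k :=
  ne_neg_natCast_of_re_pos (by
    rw [sub_re, add_re, re_rho_sub_I_mul, one_re, ofReal_re]
    linarith) k

lemma isSturmLiouvilleSol_bfun (hl : 0 ≤ l.im) :
    IsSturmLiouvilleSol (Del m₁ m₂) (-(l ^ 2 + rho m₁ m₂ ^ 2)) (bfun m₁ m₂ l) := by
  rw [bfun_eq_jacobiSecond]
  refine IsSturmLiouvilleSol.const_mul ?_ _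
  convert isSturmLiouvilleSol_jacobiSecond (rho_sub_I_mul_add_one_ne_neg hl) using 1
  linear_combination -l ^ 2 * I_sq

lemma isBoundedUnder_norm_Del_mul_bfun (hm : 0 < m₁ + m₂) (hl : 0 ≤ l.im) :
    IsBoundedUnder (· ≤ ·) (𝓝[>] 0) fun t => ‖(Del m₁ m₂ t : ℂ) * bfun m₁ m₂ l t‖ := by
  have h := ((isBigO_one_iff ℝ).2 (isBoundedUnder_norm_Del_mul_jacobiSecond hm
    (rho_sub_I_mul_add_one_ne_neg hl))).const_mul_left
      (jacobiSecondFlux m₁ m₂ (rho m₁ m₂ - I * l))⁻¹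
  simpa only [bfun_eq_jacobiSecond, mul_left_comm] using (isBigO_one_iff ℝ).1 h

lemma tendsto_Del_mul_deriv_bfun (hρ : 0 < rho m₁ m₂) (hl : 0 ≤ l.im) :
    Tendsto (fun t => (Del m₁ m₂ t : ℂ) * deriv (bfun m₁ m₂ l) t) (𝓝[>] 0) (𝓝 (-1)) := by
  have hflux : jacobiSecondFlux m₁ m₂ (rho m₁ m₂ - I * l) ≠ 0 :=
    jacobiSecondFlux_ne_zero hρ (by rw [re_rho_sub_I_mul]; linarith)
  have h := (tendsto_Del_mul_deriv_jacobiSecond (natCast_add_pos_of_rho_pos hρ)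
    (rho_sub_I_mul_add_one_ne_neg hl)).const_mul (jacobiSecondFlux m₁ m₂ (rho m₁ m₂ - I * l))⁻¹
  rw [mul_neg, inv_mul_cancel₀ hflux] at h
  refine h.congr fun t => ?_
  rw [bfun_eq_jacobiSecond, deriv_const_mul_field, mul_left_comm]

lemma exists_norm_bfun_mul_Del_le_exp (hm : 0 < m₁ + m₂) (hl : 0 ≤ l.im)
    (hl' : l.im ≤ rho m₁ m₂) : ∃ C ≥ 0, ∀ t, 0 < t →
      ‖bfun m₁ m₂ l t‖ * Del m₁ m₂ t ≤ C * Real.exp ((rho m₁ m₂ - l.im) * t) := by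
  obtain ⟨C, hC₀, hC⟩ :=
    exists_norm_jacobiSecond_mul_Del_le hm (rho_sub_I_mul_add_one_ne_neg hl)
  rw [re_rho_sub_I_mul, show 2 * rho m₁ m₂ - (rho m₁ m₂ + l.im) = rho m₁ m₂ - l.im by ring] at hC
  refine ⟨‖(jacobiSecondFlux m₁ m₂ (rho m₁ m₂ - I * l))⁻¹‖ * C, by positivity, fun t ht => ?_⟩
  rw [bfun_eq_jacobiSecond, norm_mul, mul_assoc, mul_assoc]
  exact mul_le_mul_of_nonneg_left ((hC t ht).trans (mul_le_mul_of_nonneg_left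
    (cosh_rpow_le_exp ht (sub_nonneg.2 hl')) hC₀)) (norm_nonneg _)

lemma exists_norm_bfun_mul_Del_le (hm : 0 < m₁ + m₂) (hl : 0 ≤ l.im)
    (hl' : l.im ≤ rho m₁ m₂) : ∃ C, ∀ t s, 0 < t → t ≤ s →
      ‖bfun m₁ m₂ l s‖ * Del m₁ m₂ t ≤ C * Real.exp ((rho m₁ m₂ - l.im) * (2 * t - s)) := by
  obtain ⟨C, hC₀, hC⟩ := exists_norm_bfun_mul_Del_le_exp hm hl hl'
  refine ⟨2 ^ m₂ * C, fun t s ht hts => ?_⟩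
  calc ‖bfun m₁ m₂ l s‖ * Del m₁ m₂ t
      ≤ ‖bfun m₁ m₂ l s‖ * (2 ^ m₂ * Real.exp (-(2 * rho m₁ m₂ * (s - t))) * Del m₁ m₂ s) := by
        gcongr
        exact Del_le_exp_mul_Del ht hts
    _ = 2 ^ m₂ * Real.exp (-(2 * rho m₁ m₂ * (s - t))) *
        (‖bfun m₁ m₂ l s‖ * Del m₁ m₂ s) := mul_left_comm _ _ _
    _ ≤ 2 ^ m₂ * Real.exp (-(2 * rho m₁ m₂ * (s - t))) *
        (C * Real.exp ((rho m₁ m₂ - l.im) * s)) := by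
        exact mul_le_mul_of_nonneg_left (hC s (ht.trans_le hts)) (by positivity)
    _ = 2 ^ m₂ * C * Real.exp ((rho m₁ m₂ - l.im) * (2 * t - s) - 2 * l.im * (s - t)) := by
        rw [mul_mul_mul_comm, ← Real.exp_add]
        ring_nf
    _ ≤ 2 ^ m₂ * C * Real.exp ((rho m₁ m₂ - l.im) * (2 * t - s)) := by
        gcongr
        linarith [mul_nonneg hl (sub_nonneg.2 hts)]

lemma isVolterraPair_sph_bfun (hl : 0 < l.im) (hl' : l.im < rho m₁ m₂) :
    IsVolterraPair (Del m₁ m₂) (-(l ^ 2 + rho m₁ m₂ ^ 2)) (rho m₁ m₂ - l.im)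
      (sph m₁ m₂ l) (bfun m₁ m₂ l) where
  rate_pos := sub_pos.2 hl'
  continuousOn_weight := continuous_Del.continuousOn
  weight_pos _ := Del_pos
  isSol_left := isSturmLiouvilleSol_sph
  isSol_right := isSturmLiouvilleSol_bfun hl.le
  norm_left_le := (exists_norm_sph_le_exp hl hl'.le).imp fun _ hC t _ => hC t
  norm_right_mul_weight_le :=
    exists_norm_bfun_mul_Del_le (natCast_add_pos_of_rho_pos (hl.trans hl')) hl.le hl'.le

lemma tendsto_wronskian_sph (hm : 0 < m₁ + m₂) :
    Tendsto (wronskian (Del m₁ m₂) (sph m₁ m₂ l) (sph m₁ m₂ μ)) (𝓝[>] 0) (𝓝 0) :=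
  tendsto_wronskian_zero (tendsto_Del_zero hm) tendsto_sph_zero tendsto_deriv_sph_zero
    tendsto_sph_zero tendsto_deriv_sph_zero

lemma tendsto_wronskian_bfun_sph (hρ : 0 < rho m₁ m₂) (hl : 0 ≤ l.im) :
    Tendsto (wronskian (Del m₁ m₂) (bfun m₁ m₂ l) (sph m₁ m₂ μ)) (𝓝[>] 0) (𝓝 1) := by
  simpa only [mul_one, neg_neg] using tendsto_wronskian_of_tendsto_flux
    (isBoundedUnder_norm_Del_mul_bfun (natCast_add_pos_of_rho_pos hρ) hl)
    (tendsto_Del_mul_deriv_bfun hρ hl) tendsto_sph_zero (tendsto_deriv_sph_zero (l := μ))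

lemma integrableOn_mul_Del {f : ℝ → ℂ} (hf : AEStronglyMeasurable f (volume.restrict (Ioi 0)))
    (hf' : IntegrableOn (fun s => ‖f s‖ * Del m₁ m₂ s) (Ioi 0)) :
    IntegrableOn (fun s => f s * (Del m₁ m₂ s : ℂ)) (Ioi 0) := by
  refine Integrable.mono hf' (hf.mul (continuous_ofReal.comp continuous_Del).aestronglyMeasurable)
    (.of_forall fun s => ?_)
  rw [norm_mul, norm_mul, norm_norm, norm_real]

lemma ofReal_sq_ne_sq_of_im_pos (hl : 0 < l.im) (ξ : ℝ) : (ξ : ℂ) ^ 2 ≠ l ^ 2 := fun h => by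
  rcases sq_eq_sq_iff_eq_or_eq_neg.1 h with rfl | h
  · simp at hl
  · have := congrArg im h
    rw [ofReal_im, neg_im] at this
    linarith

/-- The spherical transform of `f` at `μ`. -/
def sphericalTransform (m₁ m₂ : ℕ) (f : ℝ → ℂ) (μ : ℂ) : ℂ :=
  ∫ s in Ioi 0, f s * sph m₁ m₂ μ s * Del m₁ m₂ s

theorem stmt10_general {f : ℝ → ℂ} (hl : 0 < l.im) (hl' : l.im < rho m₁ m₂)
    (hf : IntegrableOn (fun s => f s * Del m₁ m₂ s) (Ioi 0)) (hμ : |μ.im| ≤ rho m₁ m₂)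
    (hμl : μ ^ 2 ≠ l ^ 2) :
    IntegrableOn (fun t => Tfun m₁ m₂ l f t * sph m₁ m₂ μ t * Del m₁ m₂ t) (Ioi 0) ∧
      ∫ t in Ioi 0, Tfun m₁ m₂ l f t * sph m₁ m₂ μ t * Del m₁ m₂ t =
        (sphericalTransform m₁ m₂ f l - sphericalTransform m₁ m₂ f μ) / (μ ^ 2 - l ^ 2) := by
  have hρ : 0 < rho m₁ m₂ := hl.trans hl'
  obtain ⟨X, hX⟩ := exists_norm_sph_le hρ hμ
  obtain ⟨hint, heq⟩ := (isVolterraPair_sph_bfun hl hl').integral_volterraOperator_mul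
    isSturmLiouvilleSol_sph (fun t _ => hX t) (fun h => hμl (by linear_combination -h))
    (tendsto_wronskian_bfun_sph hρ hl.le) (tendsto_wronskian_bfun_sph hρ hl.le)
    (tendsto_wronskian_sph (natCast_add_pos_of_rho_pos hρ)) hf
  refine ⟨hint, heq.trans ?_⟩
  rw [← neg_div_neg_eq, neg_sub, neg_sub]
  congr 1
  ring

end SphericalFunctions

theorem stmt10 (m₁ m₂ : ℕ) (hm₁ : 1 ≤ m₁) (l : ℂ) (hl₀ : 0 < l.im) (hl₁ : l.im < rho m₁ m₂)
    (f : ℝ → ℂ) (hf : Measurable f)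
    (hf₁ : IntegrableOn (fun s : ℝ => ‖f s‖ * Del m₁ m₂ s) (Set.Ioi 0))
    (fhat : ℂ → ℂ)
    (hfhat : ∀ μ : ℂ, |μ.im| ≤ rho m₁ m₂ →
      fhat μ = ∫ s in Set.Ioi (0 : ℝ), f s * sph m₁ m₂ μ s * (Del m₁ m₂ s : ℂ)) (ξ : ℝ) :
    IntegrableOn
      (fun t : ℝ => Tfun m₁ m₂ l f t * sph m₁ m₂ (ξ : ℂ) t * (Del m₁ m₂ t : ℂ))
      (Set.Ioi 0) ∧
    (∫ t in Set.Ioi (0 : ℝ), Tfun m₁ m₂ l f t * sph m₁ m₂ (ξ : ℂ) t * (Del m₁ m₂ t : ℂ)) =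
      (fhat l - fhat (ξ : ℂ)) / ((ξ : ℂ) ^ 2 - l ^ 2) := by
  have hξ : |(ξ : ℂ).im| ≤ rho m₁ m₂ := by simpa using (hl₀.trans hl₁).le
  rw [hfhat l (by simpa [abs_of_pos hl₀] using hl₁.le), hfhat ξ hξ]
  exact stmt10_general hl₀ hl₁ (integrableOn_mul_Del hf.aestronglyMeasurable hf₁) hξ
    (ofReal_sq_ne_sq_of_im_pos hl₀ ξ)

end
end

section
/- Fix real numbers R₁, R₂ > 0 and a non-negative integer k. Then there exists a polynomial P in three variables, of total degree 2k with all coefficients non-negative, such that for all a, b, c ∈ ℂ satisfying Re(c−a−b) > R₁, Re(c−b) > R₂, Re b > −k + 1/2, with c not a non-positive integer, and for all x ∈ [0,1): |₂F₁(a,b;c;x)| ≤ (P(|a|,|b|,|c|)/|(c)_{2k}|) · |Γ(c+2k)/(Γ(b+k)Γ(c−b+k))|, where (c)_{2k} = c(c+1)⋯(c+2k−1) is the Pochhammer symbol. -/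
open Complex

noncomputable section

/-
With the regularized function `𝐅(a, b; c; z) = ₂F₁(a, b; c; z) / Γ(c)`, which is entire in `c`, and
`Γ(c + 2k) = (c)₂ₖ Γ(c)`, the claim becomes
`‖𝐅(a, b; c; x)‖ ≤ P(‖a‖, ‖b‖, ‖c‖) / ‖Γ(b + k) Γ(c - b + k)‖`.
For `k = 0` this is Euler's integral
`Γ(b) Γ(d) 𝐅(a, b; b + d; x) = ∫₀¹ (1 - xt)⁻ᵃ tᵇ⁻¹ (1 - t)ᵈ⁻¹ dt`,
whose integrand is dominated by a fixed Beta integrand because `1 - t ≤ 1 - xt ≤ 1`.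
A contiguous relation writes `𝐅(a, b; c)` as a combination of `𝐅(a, b + 1; c + 2)` and
`𝐅(a + 1, b + 1; c + 2)` with coefficients quadratic in `a, b, c`. Both shifts preserve lower bounds
on `Re (c - a - b)` and `Re (c - b)` and increase `Re b` by one, so `k` applications of the relation
reduce `Re b > s - k` to `Re b > s`.
-/

open MeasureTheory ProbabilityTheory Set

open scoped Nat NNReal

local notation "𝐅" => regularizedGaussHGFun

section RegularizedHypergeometric

theorem hyp_eq_Gamma_mul_regularizedGaussHGFun (a b : ℂ) {c : ℂ} (z : ℂ)
    (hc : ∀ n : ℕ, c ≠ -(n : ℂ)) : hyp a b c z = Gamma c * 𝐅 a b c z := by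
  rw [← ordinaryHypergeometric_div_Gamma_eq hc, mul_div_cancel₀ _ (Gamma_ne_zero hc),
    ordinaryHypergeometric_eq_tsum, hyp]
  refine tsum_congr fun n => ?_
  rw [smul_eq_mul, div_eq_mul_inv, mul_inv]
  ring

theorem Gamma_eq_Gamma_add_natCast_div {c : ℂ} (hc : ∀ n : ℕ, c ≠ -(n : ℂ)) (n : ℕ) :
    Gamma c = Gamma (c + n) / (ascPochhammer ℂ n).eval c := by
  have hcn : Gamma (c + n) ≠ 0 := Gamma_ne_zero fun m h =>
    hc (m + n) (by push_cast; linear_combination h)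
  rw [← Gamma_add_nat_div_Gamma_eq c hc, div_div_cancel₀ hcn]

theorem hasSum_regularizedGaussHGFun (a b c : ℂ) {z : ℂ} (hz : ‖z‖ < 1) :
    HasSum (fun n => (regularizedGaussHGFunSeries a b c).coeff n * z ^ n) (𝐅 a b c z) := by
  have hz' : z ∈ Metric.eball 0 (regularizedGaussHGFunSeries a b c).radius :=
    Metric.eball_subset_eball (radius_regularizedGaussHGFunSeries_ge_one a b c)
      (by simpa [enorm_eq_nnnorm, ← NNReal.coe_lt_coe] using hz)
  refine ((regularizedGaussHGFunSeries a b c).hasSum hz').congr_fun fun n => ?_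
  rw [FormalMultilinearSeries.apply_eq_pow_smul_coeff, smul_eq_mul, mul_comm]

theorem ascPochhammer_eval_mul_add_natCast {R : Type*} [CommSemiring R] (n : ℕ) (r : R) :
    (ascPochhammer R n).eval r * (r + n) = r * (ascPochhammer R n).eval (r + 1) := by
  rw [← ascPochhammer_succ_eval, ascPochhammer_succ_left]
  simp

theorem coeff_regularizedGaussHGFunSeries_eq_add (a b c : ℂ) (n : ℕ) :
    (regularizedGaussHGFunSeries a b c).coeff n =
      b * (regularizedGaussHGFunSeries a (b + 1) (c + 1)).coeff n +
        (c - b) * (regularizedGaussHGFunSeries a b (c + 1)).coeff n := by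
  have hΓ := one_div_Gamma_eq_self_mul_one_div_Gamma_add_one (c + n)
  simp only [coeff_regularizedGaussHGFunSeries, div_eq_mul_inv, mul_inv,
    add_right_comm c 1] at hΓ ⊢
  rw [hΓ]
  linear_combination (ascPochhammer ℂ n).eval a * (n ! : ℂ)⁻¹ * (Gamma (c + n + 1))⁻¹ *
    ascPochhammer_eval_mul_add_natCast n b

theorem coeff_succ_regularizedGaussHGFunSeries_sub (a b c : ℂ) (n : ℕ) :
    (regularizedGaussHGFunSeries a (b + 1) c).coeff (n + 1) -
        (regularizedGaussHGFunSeries a b c).coeff (n + 1) =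
      a * (regularizedGaussHGFunSeries (a + 1) (b + 1) (c + 1)).coeff n := by
  have hsucc (r : ℂ) : (ascPochhammer ℂ (n + 1)).eval r =
      r * (ascPochhammer ℂ n).eval (r + 1) := by
    rw [ascPochhammer_succ_eval, ascPochhammer_eval_mul_add_natCast]
  have hn : (n + 1 : ℂ) ≠ 0 := n.cast_add_one_ne_zero
  simp only [coeff_regularizedGaussHGFunSeries, hsucc a, hsucc b,
    ascPochhammer_succ_eval n (b + 1), Nat.factorial_succ, Nat.cast_mul, Nat.cast_succ,
    add_assoc c 1, add_comm (1 : ℂ) n]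
  simp only [div_eq_mul_inv, mul_inv]
  linear_combination a * (ascPochhammer ℂ n).eval (a + 1) * (ascPochhammer ℂ n).eval (b + 1) *
    (n ! : ℂ)⁻¹ * (Gamma (c + (n + 1)))⁻¹ * mul_inv_cancel₀ hn

variable (a b c : ℂ) {z : ℂ}

theorem regularizedGaussHGFun_eq_add (hz : ‖z‖ < 1) :
    𝐅 a b c z = b * 𝐅 a (b + 1) (c + 1) z + (c - b) * 𝐅 a b (c + 1) z := by
  refine (hasSum_regularizedGaussHGFun a b c hz).unique
    ((((hasSum_regularizedGaussHGFun a (b + 1) (c + 1) hz).mul_left b).add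
      ((hasSum_regularizedGaussHGFun a b (c + 1) hz).mul_left (c - b))).congr_fun fun n => ?_)
  rw [coeff_regularizedGaussHGFunSeries_eq_add]
  ring

theorem regularizedGaussHGFun_add_one_sub (hz : ‖z‖ < 1) :
    𝐅 a (b + 1) c z - 𝐅 a b c z = a * z * 𝐅 (a + 1) (b + 1) (c + 1) z := by
  have h := (hasSum_regularizedGaussHGFun a (b + 1) c hz).sub
    (hasSum_regularizedGaussHGFun a b c hz)
  rw [← hasSum_nat_add_iff' 1, Finset.sum_range_one] at h
  simp only [coeff_regularizedGaussHGFunSeries, ascPochhammer_zero, Polynomial.eval_one, sub_self,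
    sub_zero] at h
  refine h.unique (((hasSum_regularizedGaussHGFun (a + 1) (b + 1) (c + 1) hz).mul_left
    (a * z)).congr_fun fun n => ?_)
  simp only [← coeff_regularizedGaussHGFunSeries]
  rw [← sub_mul, coeff_succ_regularizedGaussHGFunSeries_sub]
  ring

theorem regularizedGaussHGFun_eq_add_two (hz : ‖z‖ < 1) :
    𝐅 a b c z = c * (c + 1 - a) * 𝐅 a (b + 1) (c + 2) z +
      a * (c - (c - b) * z) * 𝐅 (a + 1) (b + 1) (c + 2) z := by
  have hab := regularizedGaussHGFun_eq_add a b c hz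
  have hb := regularizedGaussHGFun_add_one_sub a b (c + 1) hz
  have ha := regularizedGaussHGFun_eq_add (b + 1) a (c + 1) hz
  simp only [regularizedGaussHGFun_symm (b + 1), add_assoc c, one_add_one_eq_two] at ha hb
  linear_combination hab + (b - c) * hb + c * ha

theorem norm_regularizedGaussHGFun_le_of_shift {M : ℝ} (hz : ‖z‖ < 1)
    (h₀ : ‖𝐅 a (b + 1) (c + 2) z‖ ≤ M) (h₁ : ‖𝐅 (a + 1) (b + 1) (c + 2) z‖ ≤ M) :
    ‖𝐅 a b c z‖ ≤ 3 * (1 + ‖a‖ + ‖b‖ + ‖c‖) ^ 2 * M := by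
  have ha := norm_nonneg a
  have hb := norm_nonneg b
  have hc := norm_nonneg c
  set S := 1 + ‖a‖ + ‖b‖ + ‖c‖
  have hca : ‖c + 1 - a‖ ≤ S := by
    linarith [norm_sub_le (c + 1) a, norm_add_le c 1, norm_one (α := ℂ)]
  have hcb : ‖c - (c - b) * z‖ ≤ 2 * S := by
    have : ‖(c - b) * z‖ ≤ ‖c - b‖ := by
      rw [norm_mul]
      exact mul_le_of_le_one_right (norm_nonneg _) hz.le
    linarith [norm_sub_le c ((c - b) * z), norm_sub_le c b]
  calc ‖𝐅 a b c z‖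
      ≤ ‖c‖ * ‖c + 1 - a‖ * ‖𝐅 a (b + 1) (c + 2) z‖ +
          ‖a‖ * ‖c - (c - b) * z‖ * ‖𝐅 (a + 1) (b + 1) (c + 2) z‖ := by
        rw [regularizedGaussHGFun_eq_add_two a b c hz]
        exact (norm_add_le _ _).trans_eq (by simp only [norm_mul])
    _ ≤ S * S * M + S * (2 * S) * M := by gcongr <;> linarith
    _ = 3 * S ^ 2 * M := by ring

end RegularizedHypergeometric

section EulerIntegral

/-- The integrand of Euler's Beta integral `Complex.betaIntegral`, named so that its modulus,
integrability and shifts in `u` can be discussed separately from the integral. -/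
def betaIntegrand (u v : ℂ) (t : ℝ) : ℂ := (t : ℂ) ^ (u - 1) * (1 - (t : ℂ)) ^ (v - 1)

theorem betaIntegrand_add_natCast (u v : ℂ) (n : ℕ) {t : ℝ} (ht : t ≠ 0) :
    betaIntegrand (u + n) v t = (t : ℂ) ^ n * betaIntegrand u v t := by
  rw [betaIntegrand, betaIntegrand, add_sub_right_comm, cpow_add _ _ (ofReal_ne_zero.2 ht),
    cpow_natCast]
  ring

theorem norm_betaIntegrand (u v : ℂ) {t : ℝ} (ht : t ∈ Ioo 0 1) :
    ‖betaIntegrand u v t‖ = t ^ (u.re - 1) * (1 - t) ^ (v.re - 1) := by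
  rw [betaIntegrand, norm_mul, ← ofReal_one, ← ofReal_sub, norm_cpow_eq_rpow_re_of_pos ht.1,
    norm_cpow_eq_rpow_re_of_pos (sub_pos.2 ht.2)]
  simp

theorem intervalIntegrable_betaIntegrand {u v : ℂ} (hu : 0 < u.re) (hv : 0 < v.re) :
    IntervalIntegrable (betaIntegrand u v) volume 0 1 :=
  betaIntegral_convergent hu hv

theorem integral_norm_betaIntegrand {u v : ℂ} (hu : 0 < u.re) (hv : 0 < v.re) :
    ∫ t in (0 : ℝ)..1, ‖betaIntegrand u v t‖ = beta u.re v.re := by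
  have hint : IntervalIntegrable (betaIntegrand u.re v.re) volume 0 1 :=
    intervalIntegrable_betaIntegrand hu hv
  rw [beta_eq_betaIntegralReal _ _ hu hv]
  refine Eq.trans ?_ (reCLM.intervalIntegral_comp_comm hint)
  refine intervalIntegral.integral_congr_Ioo_of_le zero_le_one fun t ht => ?_
  rw [norm_betaIntegrand u v ht, reCLM_apply]
  norm_cast
  rw [← ofReal_cpow ht.1.le, ← ofReal_cpow (sub_nonneg.2 ht.2.le), ← ofReal_mul, ofReal_re]

theorem hasSum_one_sub_cpow_neg (a : ℂ) {z : ℂ} (hz : ‖z‖ < 1) :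
    HasSum (fun n : ℕ => (ascPochhammer ℂ n).eval a / n ! * z ^ n) ((1 - z) ^ (-a)) := by
  have h := (one_div_one_sub_cpow_hasFPowerSeriesOnBall_zero a).hasSum (y := z)
    (by simpa [enorm_eq_nnnorm, ← NNReal.coe_lt_coe] using hz)
  rw [zero_add, one_div, ← cpow_neg] at h
  refine h.congr_fun fun n => ?_
  have hchoose := Ring.factorial_nsmul_multichoose_eq_ascPochhammer a n
  rw [Polynomial.ascPochhammer_smeval_eq_eval, nsmul_eq_mul, Ring.multichoose_eq] at hchoose
  rw [← hchoose, mul_div_cancel_left₀ _ (Nat.cast_ne_zero.2 n.factorial_ne_zero),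
    FormalMultilinearSeries.ofScalars_apply_eq, smul_eq_mul]

theorem integral_pow_mul_betaIntegrand {b d : ℂ} (hb : 0 < b.re) (hd : 0 < d.re) (n : ℕ) :
    ∫ t in (0 : ℝ)..1, (t : ℂ) ^ n * betaIntegrand b d t =
      Gamma b * Gamma d * (ascPochhammer ℂ n).eval b / Gamma (b + d + n) := by
  have hbn : 0 < (b + n).re := by simpa using add_pos_of_pos_of_nonneg hb n.cast_nonneg
  have hb' (m : ℕ) : b ≠ -m := by
    rintro rfl
    exact hb.not_ge (by simp)
  calc ∫ t in (0 : ℝ)..1, (t : ℂ) ^ n * betaIntegrand b d t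
      = betaIntegral (b + n) d :=
        intervalIntegral.integral_congr_Ioo_of_le zero_le_one fun t ht =>
          (betaIntegrand_add_natCast b d n ht.1.ne').symm
    _ = Gamma b * Gamma d * (ascPochhammer ℂ n).eval b / Gamma (b + d + n) := by
        rw [betaIntegral_eq_Gamma_mul_div _ _ hbn hd, ← Gamma_add_nat_div_Gamma_eq b hb',
          mul_right_comm, mul_div_cancel₀ _ (Gamma_ne_zero hb'), add_right_comm]

theorem Gamma_mul_Gamma_mul_regularizedGaussHGFun (a : ℂ) {b d z : ℂ} (hb : 0 < b.re)
    (hd : 0 < d.re) (hz : ‖z‖ < 1) :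
    Gamma b * Gamma d * 𝐅 a b (b + d) z =
      ∫ t in (0 : ℝ)..1, (1 - z * t) ^ (-a) * betaIntegrand b d t := by
  set p : ℕ → ℂ := fun n => (ascPochhammer ℂ n).eval a / n ! with hp
  have hβ := intervalIntegrable_betaIntegrand hb hd
  have hbin : Summable fun n => ‖p n * z ^ n‖ := (hasSum_one_sub_cpow_neg a hz).summable.norm
  have hzt {t : ℝ} (ht : t ∈ uIoc (0 : ℝ) 1) : ‖z * t‖ < 1 := by
    rw [uIoc_of_le zero_le_one] at ht
    rw [norm_mul, norm_real, Real.norm_of_nonneg ht.1.le]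
    exact (mul_le_of_le_one_right (norm_nonneg z) ht.2).trans_lt hz
  have hsum : HasSum (fun n => ∫ t in (0 : ℝ)..1, p n * (z * t) ^ n * betaIntegrand b d t)
      (∫ t in (0 : ℝ)..1, (1 - z * t) ^ (-a) * betaIntegrand b d t) := by
    refine intervalIntegral.hasSum_integral_of_dominated_convergence
      (fun n t => ‖p n * z ^ n‖ * ‖betaIntegrand b d t‖) (fun n => ?_)
      (fun n => ae_of_all _ fun t ht => ?_) (ae_of_all _ fun t _ => hbin.mul_right _) ?_
      (ae_of_all _ fun t ht => (hasSum_one_sub_cpow_neg a (hzt ht)).mul_right _)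
    · have : Continuous fun t : ℝ => p n * (z * t) ^ n := by fun_prop
      exact this.aestronglyMeasurable.mul hβ.def'.aestronglyMeasurable
    · rw [uIoc_of_le zero_le_one] at ht
      rw [norm_mul, mul_pow, ← mul_assoc, norm_mul _ ((t : ℂ) ^ n), norm_pow (t : ℂ), norm_real,
        Real.norm_of_nonneg ht.1.le]
      gcongr
      exact mul_le_of_le_one_right (norm_nonneg _) (pow_le_one₀ ht.1.le ht.2)
    · simp only [tsum_mul_right]
      exact hβ.norm.const_mul _
  refine ((hasSum_regularizedGaussHGFun a b (b + d) hz).mul_left _).unique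
    (hsum.congr_fun fun n => ?_)
  simp only [mul_pow, mul_assoc, intervalIntegral.integral_const_mul,
    integral_pow_mul_betaIntegrand hb hd, coeff_regularizedGaussHGFunSeries, hp]
  ring

end EulerIntegral

section Bounds

theorem rpow_neg_mul_rpow_le_rpow {y w α δ ρ : ℝ} (hy : 0 < y) (hyw : y ≤ w) (hw : w ≤ 1)
    (hδ : ρ ≤ δ) (hδα : ρ ≤ δ - α) : w ^ (-α) * y ^ δ ≤ y ^ ρ := by
  have hy1 : y ≤ 1 := hyw.trans hw
  rcases le_total α 0 with hα | hα
  · calc w ^ (-α) * y ^ δ ≤ 1 * y ^ δ := by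
          gcongr
          exact Real.rpow_le_one (hy.le.trans hyw) hw (neg_nonneg.2 hα)
      _ ≤ y ^ ρ := by
          rw [one_mul]
          exact Real.rpow_le_rpow_of_exponent_ge hy hy1 hδ
  · calc w ^ (-α) * y ^ δ ≤ y ^ (-α) * y ^ δ :=
          mul_le_mul_of_nonneg_right (Real.rpow_le_rpow_of_nonpos hy hyw (neg_nonpos.2 hα))
            (by positivity)
      _ = y ^ (δ - α) := by rw [← Real.rpow_add hy, neg_add_eq_sub]
      _ ≤ y ^ ρ := Real.rpow_le_rpow_of_exponent_ge hy hy1 hδα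

variable {a b c d : ℂ} {r s x : ℝ}

theorem norm_one_sub_cpow_mul_betaIntegrand_le {t : ℝ} (hb : s ≤ b.re) (hd : r ≤ d.re)
    (hda : r ≤ (d - a).re) (hx : x ∈ Ico 0 1) (ht : t ∈ Ioo 0 1) :
    ‖(1 - (x : ℂ) * t) ^ (-a) * betaIntegrand b d t‖ ≤ ‖betaIntegrand s r t‖ := by
  have ht' : 0 < 1 - t := sub_pos.2 ht.2
  have hxt : x * t ≤ t := mul_le_of_le_one_left ht.1.le hx.2.le
  have hxt' : 0 ≤ x * t := mul_nonneg hx.1 ht.1.le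
  rw [sub_re] at hda
  rw [norm_mul, norm_betaIntegrand _ _ ht, norm_betaIntegrand _ _ ht, ← ofReal_mul, ← ofReal_one,
    ← ofReal_sub, norm_cpow_eq_rpow_re_of_pos (by linarith), neg_re, ofReal_re, ofReal_re,
    mul_left_comm]
  refine mul_le_mul (Real.rpow_le_rpow_of_exponent_ge ht.1 ht.2.le (sub_le_sub_right hb 1)) ?_
    (mul_nonneg (Real.rpow_nonneg (by linarith) _) (Real.rpow_nonneg ht'.le _))
    (Real.rpow_nonneg ht.1.le _)
  apply rpow_neg_mul_rpow_le_rpow ht' <;> linarith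

theorem norm_regularizedGaussHGFun_le_beta_div (hr : 0 < r) (hs : 0 < s) (hca : r ≤ (c - a - b).re)
    (hcb : r ≤ (c - b).re) (hb : s ≤ b.re) (hx : x ∈ Ico 0 1) :
    ‖𝐅 a b c x‖ ≤ beta s r / ‖Gamma b * Gamma (c - b)‖ := by
  have hb0 : 0 < b.re := hs.trans_le hb
  have hcb0 : 0 < (c - b).re := hr.trans_le hcb
  have hΓ : 0 < ‖Gamma b * Gamma (c - b)‖ := norm_pos_iff.2
    (mul_ne_zero (Gamma_ne_zero_of_re_pos hb0) (Gamma_ne_zero_of_re_pos hcb0))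
  have hx1 : ‖(x : ℂ)‖ < 1 := by rw [norm_real, Real.norm_of_nonneg hx.1]; exact hx.2
  have euler := Gamma_mul_Gamma_mul_regularizedGaussHGFun a hb0 hcb0 hx1
  rw [add_sub_cancel] at euler
  rw [le_div_iff₀' hΓ, ← norm_mul, euler]
  calc ‖∫ t in (0 : ℝ)..1, (1 - (x : ℂ) * t) ^ (-a) * betaIntegrand b (c - b) t‖
      ≤ ∫ t in (0 : ℝ)..1, ‖betaIntegrand s r t‖ := by
        refine intervalIntegral.norm_integral_le_of_norm_le zero_le_one ?_
          (intervalIntegrable_betaIntegrand hs hr).norm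
        filter_upwards [Measure.ae_ne volume (1 : ℝ)] with t ht1 ht
        refine norm_one_sub_cpow_mul_betaIntegrand_le hb hcb ?_ hx ⟨ht.1, ht.2.lt_of_ne ht1⟩
        rwa [sub_right_comm]
    _ = beta s r := integral_norm_betaIntegrand hs hr

-- `4 * k` appears because each of the `k` shifts increases `‖a‖ + ‖b‖ + ‖c‖` by at most `4`.
theorem norm_regularizedGaussHGFun_le (hr : 0 < r) (hs : 0 < s) (hx : x ∈ Ico 0 1) (k : ℕ)
    (hca : r ≤ (c - a - b).re) (hcb : r ≤ (c - b).re) (hb : s - k ≤ b.re) :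
    ‖𝐅 a b c x‖ ≤ beta s r * 3 ^ k * (4 * k + 1 + (‖a‖ + ‖b‖ + ‖c‖)) ^ (2 * k) /
      ‖Gamma (b + k) * Gamma (c - b + k)‖ := by
  induction k generalizing a b c with
  | zero => simpa using norm_regularizedGaussHGFun_le_beta_div hr hs hca hcb (by simpa using hb) hx
  | succ k ih =>
    set A : ℝ := 4 * (k + 1 : ℕ) + 1 + (‖a‖ + ‖b‖ + ‖c‖) with hA
    set G := ‖Gamma (b + (k + 1 : ℕ)) * Gamma (c - b + (k + 1 : ℕ))‖
    have hβ := beta_pos hs hr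
    push_cast at hA hb
    simp only [sub_re] at hca hcb ih
    have hshift {a' : ℂ} (ha : ‖a'‖ ≤ ‖a‖ + 1) (hre : a'.re ≤ a.re + 1) :
        ‖𝐅 a' (b + 1) (c + 2) x‖ ≤ beta s r * 3 ^ k * A ^ (2 * k) / G := by
      have h := ih (a := a') (b := b + 1) (c := c + 2)
        (by simp only [add_re, one_re, re_ofNat]; linarith)
        (by simp only [add_re, one_re, re_ofNat]; linarith) (by rw [add_re, one_re]; linarith)
      rw [show b + 1 + (k : ℂ) = b + (k + 1 : ℕ) by push_cast; ring,
        show c + 2 - (b + 1) + (k : ℂ) = c - b + (k + 1 : ℕ) by push_cast; ring] at h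
      refine h.trans ?_
      gcongr
      linarith [norm_add_le b 1, norm_add_le c 2, norm_one (α := ℂ), Complex.norm_ofNat 2]
    have hx1 : ‖(x : ℂ)‖ < 1 := by rw [norm_real, Real.norm_of_nonneg hx.1]; exact hx.2
    calc ‖𝐅 a b c x‖
        ≤ 3 * (1 + ‖a‖ + ‖b‖ + ‖c‖) ^ 2 * (beta s r * 3 ^ k * A ^ (2 * k) / G) :=
          norm_regularizedGaussHGFun_le_of_shift a b c hx1 (hshift (by simp) (by simp))
            (hshift (norm_add_le_of_le le_rfl norm_one.le) (by simp))
      _ ≤ 3 * A ^ 2 * (beta s r * 3 ^ k * A ^ (2 * k) / G) := by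
          gcongr
          linarith
      _ = beta s r * 3 ^ (k + 1) * A ^ (2 * (k + 1)) / G := by ring

end Bounds

section NonnegativeCoefficients

open MvPolynomial

variable {σ R : Type*} [CommSemiring R]

theorem totalDegree_pow_of_noZeroDivisors [NoZeroDivisors R] {p : MvPolynomial σ R} (hp : p ≠ 0)
    (n : ℕ) : (p ^ n).totalDegree = n * p.totalDegree := by
  induction n with
  | zero => simp
  | succ n ih => rw [pow_succ, totalDegree_mul_of_isDomain (pow_ne_zero n hp) hp, ih]; ring

theorem totalDegree_C_add_sum_X [Fintype σ] [Nonempty σ] [Nontrivial R] (q : R) :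
    (C q + ∑ i, X i : MvPolynomial σ R).totalDegree = 1 := by
  classical
  refine le_antisymm ((totalDegree_add _ _).trans (max_le (by simp)
    (totalDegree_finsetSum_le fun i _ => (totalDegree_X i).le))) ?_
  obtain ⟨i⟩ := ‹Nonempty σ›
  have hi : coeff (Finsupp.single i 1) (C q + ∑ j, X j : MvPolynomial σ R) ≠ 0 := by
    simp [coeff_sum, coeff_X, coeff_C, Finsupp.single_left_inj, eq_comm]
  simpa using le_totalDegree (mem_support_iff.2 hi)

theorem totalDegree_map_of_injective {S : Type*} [CommSemiring S] {f : R →+* S}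
    (hf : Function.Injective f) (p : MvPolynomial σ R) :
    (map f p).totalDegree = p.totalDegree := by
  rw [totalDegree, support_map_of_injective p hf, totalDegree]

theorem exists_mvPolynomial_eval_eq_mul_add_sum_pow [Fintype σ] [Nonempty σ] {K q : ℝ} (hK : 0 < K)
    (hq : 0 ≤ q) (n : ℕ) : ∃ P : MvPolynomial σ ℝ, P.totalDegree = n ∧ (∀ m, 0 ≤ P.coeff m) ∧
      ∀ v : σ → ℝ, eval v P = K * (q + ∑ i, v i) ^ n := by
  lift K to ℝ≥0 using hK.le
  lift q to ℝ≥0 using hq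
  have hlin := totalDegree_C_add_sum_X (σ := σ) q
  have hlin0 : (C q + ∑ i, X i : MvPolynomial σ ℝ≥0) ≠ 0 := by
    intro h
    simp [h] at hlin
  -- Mapping from `ℝ≥0` makes the nonnegativity of the coefficients automatic.
  refine ⟨map NNReal.toRealHom (C K * (C q + ∑ i, X i) ^ n), ?_, fun m => ?_, fun v => ?_⟩
  · rw [totalDegree_map_of_injective NNReal.coe_injective, totalDegree_mul_of_isDomain
      (C_ne_zero.2 (NNReal.coe_pos.1 hK).ne') (pow_ne_zero n hlin0), totalDegree_C, zero_add,
      totalDegree_pow_of_noZeroDivisors hlin0, hlin, mul_one]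
  · rw [coeff_map]
    exact NNReal.coe_nonneg _
  · simp

end NonnegativeCoefficients

theorem stmt13_general {R₁ R₂ R₃ : ℝ} (hR₁ : 0 < R₁) (hR₂ : 0 < R₂) (hR₃ : 0 < R₃) (k : ℕ) :
    ∃ P : MvPolynomial (Fin 3) ℝ,
      P.totalDegree = 2 * k ∧ (∀ m, 0 ≤ P.coeff m) ∧
      ∀ a b c : ℂ,
        R₁ < (c - a - b).re → R₂ < (c - b).re → -(k : ℝ) + R₃ < b.re →
        (∀ n : ℕ, c ≠ -(n : ℂ)) →
        ∀ x : ℝ, 0 ≤ x → x < 1 →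
          ‖hyp a b c (x : ℂ)‖ ≤
            (MvPolynomial.eval (![‖a‖, ‖b‖, ‖c‖] : Fin 3 → ℝ) P /
              ‖(ascPochhammer ℂ (2 * k)).eval c‖) *
            ‖Complex.Gamma (c + 2 * k) /
              (Complex.Gamma (b + k) * Complex.Gamma (c - b + k))‖ := by
  have hr : 0 < min R₁ R₂ := lt_min hR₁ hR₂
  obtain ⟨P, hdeg, hcoeff, heval⟩ := exists_mvPolynomial_eval_eq_mul_add_sum_pow (σ := Fin 3)
    (mul_pos (beta_pos hR₃ hr) (pow_pos three_pos k)) (q := 4 * k + 1) (by positivity) (2 * k)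
  refine ⟨P, hdeg, hcoeff, fun a b c hca hcb hb hc x hx0 hx1 => ?_⟩
  have hF := norm_regularizedGaussHGFun_le hr hR₃ ⟨hx0, hx1⟩ k ((min_le_left _ _).trans hca.le)
    ((min_le_right _ _).trans hcb.le) (by linarith)
  rw [hyp_eq_Gamma_mul_regularizedGaussHGFun a b x hc, norm_mul,
    Gamma_eq_Gamma_add_natCast_div hc (2 * k), heval, Fin.sum_univ_three]
  refine (mul_le_mul_of_nonneg_left hF (norm_nonneg _)).trans_eq ?_
  push_cast
  simp only [norm_div, norm_mul]
  ring

theorem stmt13 (R₁ R₂ : ℝ) (hR₁ : 0 < R₁) (hR₂ : 0 < R₂) (k : ℕ) :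
    ∃ P : MvPolynomial (Fin 3) ℝ,
      P.totalDegree = 2 * k ∧ (∀ m, 0 ≤ P.coeff m) ∧
      ∀ a b c : ℂ,
        R₁ < (c - a - b).re → R₂ < (c - b).re → -(k : ℝ) + 1 / 2 < b.re →
        (∀ n : ℕ, c ≠ -(n : ℂ)) →
        ∀ x : ℝ, 0 ≤ x → x < 1 →
          ‖hyp a b c (x : ℂ)‖ ≤
            (MvPolynomial.eval (![‖a‖, ‖b‖, ‖c‖] : Fin 3 → ℝ) P /
              ‖(ascPochhammer ℂ (2 * k)).eval c‖) *
            ‖Complex.Gamma (c + 2 * k) /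
              (Complex.Gamma (b + k) * Complex.Gamma (c - b + k))‖ :=
  stmt13_general hR₁ hR₂ one_half_pos k

end
end

section
/- Let a, b, c > 0 be fixed real numbers and fix δ ∈ (0, π). Then there exist constants C₁, C₂ > 0 such that for every z ∈ ℂ∖{0} with |arg z| ≤ π − δ, C₁ · 2^{−Re z} (1+|z|)^{a+b−c−1/2} ≤ |Γ(a + z/2) Γ(b + z/2)/Γ(c + z)| ≤ C₂ · 2^{−Re z} (1+|z|)^{a+b−c−1/2}. -/
open Complex

/-!
Fix `r` real and let `E(t) = log |Γ(t + r)| - log |Γ(t)| - r log |t|`. Since `Γ(t + 1) = t Γ(t)`,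
the increment `E(t + 1) - E(t)` only involves `log |t|`, `log |t + r|` and `log |t + 1|`, and its
first order terms cancel, so it is `O(|t|⁻²)`; by Euler's limit formula `E(t + n) → 0`. Summing the
increments along `t, t + 1, t + 2, …` bounds `E` uniformly on a sector, because there `|w + x|` is
comparable with `|w| + x` for `x ≥ 0`. Hence `|Γ(w + p)| ≍ |Γ(w + q)| (1 + |w|) ^ (p - q)` for
`p, q > 0`. Comparing `Γ(a + z/2)` with `Γ(z/2 + 1/2)`, `Γ(b + z/2)` with `Γ(z/2 + 1)` and
`Γ(c + z)` with `Γ(z + 1)`, the three reference values drop out by the duplication formula.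
-/

open Filter Topology Asymptotics

lemma exists_pos_mul_norm_le_of_isTheta_principal {α E F : Type*} [SeminormedAddCommGroup E]
    [SeminormedAddCommGroup F] {f : α → E} {g : α → F} {s : Set α} (h : f =Θ[𝓟 s] g) :
    ∃ C₁ C₂ : ℝ, 0 < C₁ ∧ 0 < C₂ ∧ ∀ x ∈ s, C₁ * ‖g x‖ ≤ ‖f x‖ ∧ ‖f x‖ ≤ C₂ * ‖g x‖ := by
  obtain ⟨C₂, hC₂, hupper⟩ := h.1.exists_pos
  obtain ⟨C, hC, hlower⟩ := h.2.exists_pos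
  refine ⟨C⁻¹, C₂, inv_pos.2 hC, hC₂, fun x hx => ⟨?_, isBigOWith_principal.1 hupper x hx⟩⟩
  rw [inv_mul_le_iff₀ hC]
  exact isBigOWith_principal.1 hlower x hx

section LogNorm

lemma log_norm_one_add_le {ζ : ℂ} (hζ : 1 + ζ ≠ 0) :
    Real.log ‖1 + ζ‖ ≤ ζ.re + ‖ζ‖ ^ 2 / 2 := by
  have hsq : ‖1 + ζ‖ ^ 2 = 1 + 2 * ζ.re + ‖ζ‖ ^ 2 := by
    simp only [← normSq_eq_norm_sq, normSq_add, map_one, one_mul, conj_re]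
    ring
  have hlog := Real.log_le_sub_one_of_pos (pow_pos (norm_pos_iff.2 hζ) 2)
  rw [Real.log_pow, hsq] at hlog
  push_cast at hlog
  linarith

lemma log_norm_add_le {u v : ℂ} (hu : u ≠ 0) (huv : u + v ≠ 0) :
    Real.log ‖u + v‖ ≤ Real.log ‖u‖ + (v / u).re + ‖v‖ ^ 2 / ‖u‖ ^ 2 / 2 := by
  have hfac : u + v = u * (1 + v / u) := by field_simp
  have hone : 1 + v / u ≠ 0 := right_ne_zero_of_mul (hfac ▸ huv)
  rw [hfac, norm_mul, Real.log_mul (norm_ne_zero_iff.2 hu) (norm_ne_zero_iff.2 hone), ← div_pow,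
    ← norm_div]
  linarith [log_norm_one_add_le hone]

lemma abs_log_norm_add_sub_le {u v : ℂ} {m : ℝ} (hm : 0 < m) (hu : m ≤ ‖u‖) (huv : m ≤ ‖u + v‖) :
    |Real.log ‖u + v‖ - Real.log ‖u‖ - (v / u).re| ≤ 3 / 2 * ‖v‖ ^ 2 / m ^ 2 := by
  have hu0 : u ≠ 0 := norm_pos_iff.1 (hm.trans_le hu)
  have huv0 : u + v ≠ 0 := norm_pos_iff.1 (hm.trans_le huv)
  have hupper := log_norm_add_le hu0 huv0
  have hlower := log_norm_add_le (v := -v) huv0 (by simpa using hu0)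
  rw [add_neg_cancel_right, neg_div, neg_re, norm_neg] at hlower
  have hswap : |(v / u).re - (v / (u + v)).re| ≤ ‖v‖ ^ 2 / m ^ 2 := calc
    _ = |(v ^ 2 / (u * (u + v))).re| := by
      rw [← sub_re]
      congr 2
      field_simp
      ring
    _ ≤ ‖v‖ ^ 2 / (‖u‖ * ‖u + v‖) := by
      rw [← norm_pow, ← norm_mul, ← norm_div]
      exact abs_re_le_norm _
    _ ≤ ‖v‖ ^ 2 / m ^ 2 := by rw [sq m]; gcongr
  have hu2 : ‖v‖ ^ 2 / ‖u‖ ^ 2 ≤ ‖v‖ ^ 2 / m ^ 2 := by gcongr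
  have huv2 : ‖v‖ ^ 2 / ‖u + v‖ ^ 2 ≤ ‖v‖ ^ 2 / m ^ 2 := by gcongr
  have hpos : 0 ≤ ‖v‖ ^ 2 / m ^ 2 := by positivity
  rw [abs_le] at hswap ⊢
  rw [mul_div_assoc]
  constructor <;> linarith

lemma abs_log_norm_add_sub_mul_log_norm_add_one_sub_le {u : ℂ} {r m : ℝ} (hm : 0 < m)
    (hu : m ≤ ‖u‖) (hur : m ≤ ‖u + r‖) (hu1 : m ≤ ‖u + 1‖) :
    |Real.log ‖u + r‖ - Real.log ‖u‖ - r * (Real.log ‖u + 1‖ - Real.log ‖u‖)| ≤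
      3 / 2 * (r ^ 2 + |r|) * (1 / m ^ 2) := by
  have hr := abs_log_norm_add_sub_le hm hu hur
  have h1 := mul_le_mul_of_nonneg_left (abs_log_norm_add_sub_le hm hu hu1) (abs_nonneg r)
  have hre : ((r : ℂ) / u).re = r * (1 / u).re := by rw [div_eq_mul_one_div, re_ofReal_mul]
  rw [norm_real, Real.norm_eq_abs, sq_abs, hre] at hr
  rw [← abs_mul, norm_one] at h1
  calc _ = |(Real.log ‖u + r‖ - Real.log ‖u‖ - r * (1 / u).re) -
        r * (Real.log ‖u + 1‖ - Real.log ‖u‖ - (1 / u).re)| := by congr 1; ring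
    _ ≤ _ := abs_sub _ _
    _ ≤ _ := add_le_add hr h1
    _ = _ := by ring

lemma tendsto_log_norm_add_nat_sub_log (s : ℂ) :
    Tendsto (fun n : ℕ => Real.log ‖s + n‖ - Real.log n) atTop (𝓝 0) := by
  have hratio : Tendsto (fun n : ℕ => ‖(n : ℂ) / (n + s)‖) atTop (𝓝 1) := by
    simpa using (tendsto_natCast_div_add_atTop s).norm
  have hlog := (hratio.log one_ne_zero).neg
  rw [Real.log_one, neg_zero] at hlog
  refine hlog.congr' ?_
  filter_upwards [hratio.eventually_ne one_ne_zero] with n hn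
  obtain ⟨hn₁, hn₂⟩ := div_ne_zero_iff.1 (norm_ne_zero_iff.1 hn)
  rw [norm_div, Real.log_div (norm_ne_zero_iff.2 hn₁) (norm_ne_zero_iff.2 hn₂), norm_natCast,
    add_comm s]
  ring

end LogNorm

section GammaShift

lemma Gamma_add_nat_eq_mul_prod {s : ℂ} (hs : ∀ k : ℕ, s ≠ -k) (n : ℕ) :
    Gamma (s + n) = Gamma s * ∏ j ∈ Finset.range n, (s + j) := by
  induction n with
  | zero => simp
  | succ n ih =>
    have hn : s + n ≠ 0 := fun h => hs n (eq_neg_of_add_eq_zero_left h)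
    rw [Nat.cast_succ, ← add_assoc, Gamma_add_one _ hn, ih, Finset.prod_range_succ]
    ring

lemma tendsto_Gamma_add_nat_div {s : ℂ} (hs : ∀ k : ℕ, s ≠ -k) :
    Tendsto (fun n : ℕ => Gamma (s + (n + 1 : ℕ)) / ((n : ℂ) ^ s * n.factorial)) atTop (𝓝 1) := by
  have hΓ := Gamma_ne_zero hs
  have hlim := (tendsto_const_nhds (x := Gamma s)).div (GammaSeq_tendsto_Gamma s) hΓ
  rw [div_self hΓ] at hlim
  refine hlim.congr fun n => ?_
  rw [Pi.div_apply, GammaSeq, div_div_eq_mul_div, Gamma_add_nat_eq_mul_prod hs]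

lemma tendsto_log_norm_Gamma_add_nat_sub {s : ℂ} (hs : ∀ k : ℕ, s ≠ -k) :
    Tendsto (fun n : ℕ => Real.log ‖Gamma (s + (n + 1 : ℕ))‖ -
      (s.re * Real.log n + Real.log n.factorial)) atTop (𝓝 0) := by
  have hratio : Tendsto (fun n : ℕ => ‖Gamma (s + (n + 1 : ℕ)) / ((n : ℂ) ^ s * n.factorial)‖)
      atTop (𝓝 1) := by
    simpa using (tendsto_Gamma_add_nat_div hs).norm
  have hlog := hratio.log one_ne_zero
  rw [Real.log_one] at hlog
  refine hlog.congr' ?_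
  filter_upwards [hratio.eventually_ne one_ne_zero, eventually_gt_atTop 0] with n hn hn0
  have hnpos : (0 : ℝ) < n := Nat.cast_pos.2 hn0
  have hΓ := norm_ne_zero_iff.2 (div_ne_zero_iff.1 (norm_ne_zero_iff.1 hn)).1
  rw [norm_div, norm_mul, norm_natCast, norm_natCast_cpow_of_pos hn0,
    Real.log_div hΓ (by positivity), Real.log_mul (by positivity) (by positivity),
    Real.log_rpow hnpos]

/-- The logarithm of `|Γ(t + r) / (Γ(t) t ^ r)|`, which measures the error in the approximation
`|Γ(t + r)| ≈ |Γ(t)| |t| ^ r`. -/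
noncomputable def gammaShiftError (r : ℝ) (t : ℂ) : ℝ :=
  Real.log ‖Gamma (t + r)‖ - Real.log ‖Gamma t‖ - r * Real.log ‖t‖

variable {r : ℝ} {t : ℂ}

lemma exp_gammaShiftError (ht : ∀ k : ℕ, t ≠ -k) (htr : ∀ k : ℕ, t + r ≠ -k) :
    Real.exp (gammaShiftError r t) = ‖Gamma (t + r)‖ / (‖Gamma t‖ * ‖t‖ ^ r) := by
  have ht0 : 0 < ‖t‖ := norm_pos_iff.2 (by simpa using ht 0)
  rw [gammaShiftError, Real.exp_sub, Real.exp_sub, mul_comm r, ← Real.rpow_def_of_pos ht0,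
    Real.exp_log (norm_pos_iff.2 (Gamma_ne_zero htr)),
    Real.exp_log (norm_pos_iff.2 (Gamma_ne_zero ht)), div_div]

lemma gammaShiftError_add_one_sub (ht : ∀ k : ℕ, t ≠ -k) (htr : ∀ k : ℕ, t + r ≠ -k) :
    gammaShiftError r (t + 1) - gammaShiftError r t =
      Real.log ‖t + r‖ - Real.log ‖t‖ - r * (Real.log ‖t + 1‖ - Real.log ‖t‖) := by
  have hlog {s : ℂ} (hs : ∀ k : ℕ, s ≠ -k) :
      Real.log ‖Gamma (s + 1)‖ = Real.log ‖s‖ + Real.log ‖Gamma s‖ := by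
    have hs0 : s ≠ 0 := by simpa using hs 0
    rw [Gamma_add_one s hs0, norm_mul,
      Real.log_mul (norm_ne_zero_iff.2 hs0) (norm_ne_zero_iff.2 (Gamma_ne_zero hs))]
  rw [gammaShiftError, gammaShiftError, add_right_comm, hlog ht, hlog htr]
  ring

lemma tendsto_gammaShiftError_add_nat (ht : ∀ k : ℕ, t ≠ -k) (htr : ∀ k : ℕ, t + r ≠ -k) :
    Tendsto (fun n : ℕ => gammaShiftError r (t + n)) atTop (𝓝 0) := by
  rw [← tendsto_add_atTop_iff_nat 1]
  have hΓ := (tendsto_log_norm_Gamma_add_nat_sub htr).sub (tendsto_log_norm_Gamma_add_nat_sub ht)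
  have hnorm := (tendsto_log_norm_add_nat_sub_log (t + 1)).const_mul r
  have hlim := hΓ.sub hnorm
  rw [mul_zero, sub_zero, sub_zero] at hlim
  refine hlim.congr fun n => ?_
  have hcast : t + (n + 1 : ℕ) = t + 1 + n := by push_cast; ring
  rw [gammaShiftError, add_right_comm t, add_re, ofReal_re, ← hcast]
  ring

lemma abs_gammaShiftError_le_tsum {d : ℕ → ℝ} (hd : Monotone d) (hd0 : 0 < d 0)
    (hsum : Summable fun n => 1 / d n ^ 2) (ht : ∀ n : ℕ, d n ≤ ‖t + n‖)
    (htr : ∀ n : ℕ, d n ≤ ‖t + r + n‖) :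
    |gammaShiftError r t| ≤ 3 / 2 * (r ^ 2 + |r|) * ∑' n, 1 / d n ^ 2 := by
  have hdpos (n : ℕ) : 0 < d n := hd0.trans_le (hd n.zero_le)
  have hpole {s : ℂ} (hs : ∀ n : ℕ, d n ≤ ‖s + n‖) (k : ℕ) : s ≠ -k := fun h => by
    simpa [h] using (hdpos k).trans_le (hs k)
  have hpole_add {s : ℂ} (hs : ∀ n : ℕ, d n ≤ ‖s + n‖) (n k : ℕ) : s + n ≠ -k := fun h =>
    hpole hs (n + k) (by push_cast; linear_combination h)
  have hstep (n : ℕ) : dist (gammaShiftError r (t + n)) (gammaShiftError r (t + n.succ)) ≤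
      3 / 2 * (r ^ 2 + |r|) * (1 / d n ^ 2) := by
    have hsucc : t + (n.succ : ℂ) = t + n + 1 := by push_cast; ring
    have hcomm : t + n + (r : ℂ) = t + r + n := add_right_comm _ _ _
    rw [dist_comm, Real.dist_eq, hsucc, gammaShiftError_add_one_sub (hpole_add ht n)
      (hcomm ▸ hpole_add htr n)]
    exact abs_log_norm_add_sub_mul_log_norm_add_one_sub_le (hdpos n) (ht n) (hcomm ▸ htr n)
      (hsucc ▸ (hd n.le_succ).trans (ht n.succ))
  have hdist := dist_le_tsum_of_dist_le_of_tendsto₀ _ hstep (hsum.mul_left _)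
    (tendsto_gammaShiftError_add_nat (hpole ht) (hpole htr))
  rwa [Nat.cast_zero, add_zero, Real.dist_0_eq_abs, tsum_mul_left] at hdist

end GammaShift

/-- The closed sector `|arg z| ≤ π - δ`, that is, the complement of an open sector of half-angle `δ`
around the negative real axis. It contains `0`, since `arg 0 = 0`. -/
def sector (δ : ℝ) : Set ℂ := {z | |arg z| ≤ Real.pi - δ}

section Sector

variable {δ : ℝ} {z : ℂ} {x : ℝ}

lemma div_two_mem_sector (hz : z ∈ sector δ) : z / 2 ∈ sector δ := by
  have harg : arg (z / 2) = arg z := by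
    simpa [div_eq_inv_mul] using arg_real_mul z (inv_pos.2 (two_pos (α := ℝ)))
  rwa [sector, Set.mem_ofPred_eq, harg]

lemma neg_norm_mul_cos_le_re (hδ : 0 ≤ δ) (hz : z ∈ sector δ) : -(‖z‖ * Real.cos δ) ≤ z.re := by
  have hcos : -Real.cos δ ≤ Real.cos (arg z) := by
    rw [← Real.cos_abs (arg z), ← Real.cos_pi_sub]
    exact Real.cos_le_cos_of_nonneg_of_le_pi (abs_nonneg _) (by linarith) hz
  calc -(‖z‖ * Real.cos δ) = ‖z‖ * -Real.cos δ := by ring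
    _ ≤ ‖z‖ * Real.cos (arg z) := by gcongr
    _ = z.re := norm_mul_cos_arg z

lemma sin_half_mul_norm_add_le_norm_add (hδ : 0 ≤ δ) (hz : z ∈ sector δ) (hx : 0 ≤ x) :
    Real.sin (δ / 2) * (‖z‖ + x) ≤ ‖z + x‖ := by
  have hsin : Real.sin (δ / 2) ^ 2 = (1 - Real.cos δ) / 2 := by
    rw [Real.sin_sq_eq_half_sub, mul_div_cancel₀ _ two_ne_zero]
    ring
  have hnorm : ‖z + x‖ ^ 2 = ‖z‖ ^ 2 + 2 * x * z.re + x ^ 2 := by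
    simp only [← normSq_eq_norm_sq, normSq_apply, add_re, add_im, ofReal_re, ofReal_im]
    ring
  refine le_of_abs_le (abs_le_of_sq_le_sq ?_ (norm_nonneg _))
  rw [mul_pow, hsin, hnorm]
  linarith [mul_le_mul_of_nonneg_left (neg_norm_mul_cos_le_re hδ hz) hx,
    mul_nonneg (neg_le_iff_add_nonneg'.1 (Real.neg_one_le_cos δ)) (sq_nonneg (‖z‖ - x))]

lemma sin_half_pos (hδ : 0 < δ) (hδπ : δ < Real.pi) : 0 < Real.sin (δ / 2) :=
  Real.sin_pos_of_pos_of_lt_pi (by linarith) (by linarith)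

lemma add_ne_neg_natCast_of_mem_sector (hδ : 0 < δ) (hδπ : δ < Real.pi) (hz : z ∈ sector δ)
    (hx : 0 < x) (k : ℕ) : z + x ≠ -k := fun h => by
  have hle := sin_half_mul_norm_add_le_norm_add hδ.le hz (add_nonneg hx.le k.cast_nonneg)
  have hpos : 0 < Real.sin (δ / 2) * (‖z‖ + (x + k)) :=
    mul_pos (sin_half_pos hδ hδπ) (by positivity)
  rw [ofReal_add, ofReal_natCast, ← add_assoc z, h, neg_add_cancel, norm_zero] at hle
  exact hle.not_gt hpos

lemma isTheta_norm_add_sector (hδ : 0 < δ) (hδπ : δ < Real.pi) (hx : 0 < x) :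
    (fun w : ℂ => ‖w + x‖) =Θ[𝓟 (sector δ)] fun w => 1 + ‖w‖ := by
  have hsin := sin_half_pos hδ hδπ
  have hmin : 0 < min 1 x := lt_min one_pos hx
  refine ⟨isBigO_principal.2 ⟨max 1 x, fun w _ => ?_⟩,
    isBigO_principal.2 ⟨(Real.sin (δ / 2) * min 1 x)⁻¹, fun w hw => ?_⟩⟩
  · rw [norm_norm, Real.norm_of_nonneg (by positivity)]
    calc ‖w + x‖ ≤ ‖w‖ + x := by
          simpa only [norm_real, Real.norm_of_nonneg hx.le] using norm_add_le w x
      _ ≤ max 1 x * ‖w‖ + max 1 x :=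
        add_le_add (le_mul_of_one_le_left (norm_nonneg w) (le_max_left 1 x)) (le_max_right 1 x)
      _ = max 1 x * (1 + ‖w‖) := by ring
  · rw [norm_norm, Real.norm_of_nonneg (by positivity), ← div_eq_inv_mul,
      le_div_iff₀' (mul_pos hsin hmin)]
    calc Real.sin (δ / 2) * min 1 x * (1 + ‖w‖)
        = Real.sin (δ / 2) * (min 1 x * ‖w‖ + min 1 x) := by ring
      _ ≤ Real.sin (δ / 2) * (‖w‖ + x) := by
        gcongr
        · exact mul_le_of_le_one_left (norm_nonneg w) (min_le_left 1 x)
        · exact min_le_right 1 x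
      _ ≤ ‖w + x‖ := sin_half_mul_norm_add_le_norm_add hδ.le hw hx.le

end Sector

section GammaSector

variable {δ p q : ℝ}

lemma exists_abs_gammaShiftError_le_sector (hδ : 0 < δ) (hδπ : δ < Real.pi) (hp : 0 < p)
    (hq : 0 < q) : ∃ K, ∀ w ∈ sector δ, |gammaShiftError (p - q) (w + q)| ≤ K := by
  have hsin := sin_half_pos hδ hδπ
  have hmin : 0 < min p q := lt_min hp hq
  set d : ℕ → ℝ := fun n => Real.sin (δ / 2) * (n + min p q) with hd
  have hmono : Monotone d := fun i j hij => by simp only [hd]; gcongr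
  have hsum : Summable fun n => 1 / d n ^ 2 := by
    have := (Real.summable_one_div_nat_add_rpow (min p q) 2).2 one_lt_two
    simpa [hd, mul_pow, mul_comm] using this.mul_left (Real.sin (δ / 2) ^ 2)⁻¹
  have hlow {w : ℂ} (hw : w ∈ sector δ) {x : ℝ} (hx : min p q ≤ x) (n : ℕ) :
      d n ≤ ‖w + x + n‖ := calc
    d n ≤ Real.sin (δ / 2) * (‖w‖ + (x + n)) := by
      refine mul_le_mul_of_nonneg_left ?_ hsin.le
      linarith [norm_nonneg w]
    _ ≤ ‖w + (x + n : ℝ)‖ := sin_half_mul_norm_add_le_norm_add hδ.le hw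
      (add_nonneg (hmin.le.trans hx) n.cast_nonneg)
    _ = ‖w + x + n‖ := by rw [ofReal_add, ofReal_natCast, add_assoc]
  refine ⟨_, fun w hw => abs_gammaShiftError_le_tsum hmono (mul_pos hsin (by simpa using hmin)) hsum
    (hlow hw (min_le_right p q)) fun n => ?_⟩
  have hshift : w + q + (p - q : ℝ) = w + p := by push_cast; ring
  exact hshift ▸ hlow hw (min_le_left p q) n

theorem isTheta_Gamma_add_sector (hδ : 0 < δ) (hδπ : δ < Real.pi) (hp : 0 < p) (hq : 0 < q) :
    (fun w : ℂ => Gamma (w + p)) =Θ[𝓟 (sector δ)]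
      fun w => ‖Gamma (w + q)‖ * (1 + ‖w‖) ^ (p - q) := by
  obtain ⟨K, hK⟩ := exists_abs_gammaShiftError_le_sector hδ hδπ hp hq
  have herr : (fun w : ℂ => Real.exp (gammaShiftError (p - q) (w + q))) =Θ[𝓟 (sector δ)]
      fun _ => (1 : ℝ) :=
    Real.isTheta_exp_comp_one.2 ⟨K, eventually_map.2 (eventually_principal.2 hK)⟩
  have hpow := (isTheta_norm_add_sector hδ hδπ hq).rpow (r := p - q)
    (.of_forall fun w => norm_nonneg _) (.of_forall fun w => by positivity)
  have hmul := (herr.mul (isTheta_refl (fun w : ℂ => ‖Gamma (w + q)‖) _)).mul hpow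
  simp only [one_mul] at hmul
  refine (IsTheta.of_norm_eventuallyEq ?_).trans hmul
  filter_upwards [mem_principal_self (sector δ)] with w hw
  have hwp := add_ne_neg_natCast_of_mem_sector hδ hδπ hw hp
  have hwq := add_ne_neg_natCast_of_mem_sector hδ hδπ hw hq
  have hshift : w + q + (p - q : ℝ) = w + p := by push_cast; ring
  have hΓ : 0 < ‖Gamma (w + q)‖ := norm_pos_iff.2 (Gamma_ne_zero hwq)
  have hwq0 : 0 < ‖w + q‖ := norm_pos_iff.2 (by simpa using hwq 0)
  rw [exp_gammaShiftError hwq (hshift ▸ hwp), hshift, mul_assoc, div_mul_cancel₀]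
  positivity

lemma isTheta_Gamma_div_two_add_sector (hδ : 0 < δ) (hδπ : δ < Real.pi) (hp : 0 < p)
    (hq : 0 < q) : (fun z : ℂ => Gamma (z / 2 + p)) =Θ[𝓟 (sector δ)]
      fun z => ‖Gamma (z / 2 + q)‖ * (1 + ‖z‖) ^ (p - q) := by
  have hmaps : Tendsto (fun z : ℂ => z / 2) (𝓟 (sector δ)) (𝓟 (sector δ)) :=
    tendsto_principal_principal.2 fun z hz => div_two_mem_sector hz
  have hΓ := isTheta_Gamma_add_sector hδ hδπ hp hq
  have hnorm : (fun z : ℂ => 1 + ‖z / 2‖) =Θ[𝓟 (sector δ)] fun z => 1 + ‖z‖ := by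
    have hhalf (z : ℂ) : ‖z / 2‖ = ‖z‖ / 2 := by rw [norm_div, norm_ofNat]
    constructor
    · refine isBigO_principal.2 ⟨1, fun z _ => ?_⟩
      rw [Real.norm_of_nonneg (by positivity), Real.norm_of_nonneg (by positivity), hhalf]
      linarith [norm_nonneg z]
    · refine isBigO_principal.2 ⟨2, fun z _ => ?_⟩
      rw [Real.norm_of_nonneg (by positivity), Real.norm_of_nonneg (by positivity), hhalf]
      linarith [norm_nonneg z]
  have hpow := hnorm.rpow (r := p - q) (.of_forall fun z => by positivity)
    (.of_forall fun z => by positivity)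
  exact IsTheta.trans ⟨hΓ.1.comp_tendsto hmaps, hΓ.2.comp_tendsto hmaps⟩
    ((isTheta_refl _ _).mul hpow)

lemma norm_Gamma_mul_Gamma_div_two (z : ℂ) :
    ‖Gamma (z / 2 + (1 / 2 : ℝ))‖ * ‖Gamma (z / 2 + (1 : ℝ))‖ =
      √Real.pi * (‖Gamma (z + (1 : ℝ))‖ * (2 : ℝ) ^ (-z.re)) := by
  have hdup := congrArg norm (Gamma_mul_Gamma_add_half (z / 2 + (1 / 2 : ℝ)))
  have hhalf : z / 2 + (1 / 2 : ℝ) + 1 / 2 = z / 2 + (1 : ℝ) := by push_cast; ring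
  have hdouble : 2 * (z / 2 + (1 / 2 : ℝ)) = z + (1 : ℝ) := by push_cast; ring
  have htwo : ‖(2 : ℂ) ^ (1 - (z + (1 : ℝ)))‖ = 2 ^ (-z.re) := by
    simpa using norm_cpow_eq_rpow_re_of_pos two_pos (1 - (z + (1 : ℝ)))
  rw [hhalf, hdouble, norm_mul, norm_mul, norm_mul, htwo, norm_real,
    Real.norm_of_nonneg (Real.sqrt_nonneg _)] at hdup
  rw [hdup, mul_comm]

theorem isTheta_Gamma_mul_Gamma_div_Gamma_sector {a b c : ℝ} (ha : 0 < a) (hb : 0 < b)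
    (hc : 0 < c) (hδ : 0 < δ) (hδπ : δ < Real.pi) :
    (fun z : ℂ => Gamma (a + z / 2) * Gamma (b + z / 2) / Gamma (c + z)) =Θ[𝓟 (sector δ)]
      fun z => (2 : ℝ) ^ (-z.re) * (1 + ‖z‖) ^ (a + b - c - 1 / 2) := by
  have hquot := ((isTheta_Gamma_div_two_add_sector hδ hδπ ha one_half_pos).mul
    (isTheta_Gamma_div_two_add_sector hδ hδπ hb one_pos)).div
    (isTheta_Gamma_add_sector hδ hδπ hc one_pos)
  simp only [add_comm (_ : ℂ) (ofReal a), add_comm (_ : ℂ) (ofReal b),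
    add_comm (_ : ℂ) (ofReal c)] at hquot
  refine (hquot.trans_eventuallyEq ?_).trans
    ((isTheta_const_mul_left (Real.sqrt_pos.2 Real.pi_pos).ne').2 (isTheta_refl _ _))
  filter_upwards [mem_principal_self (sector δ)] with z hz
  have hΓ : 0 < ‖Gamma (z + (1 : ℝ))‖ :=
    norm_pos_iff.2 (Gamma_ne_zero (add_ne_neg_natCast_of_mem_sector hδ hδπ hz one_pos))
  have hz0 : 0 < 1 + ‖z‖ := by positivity
  have hpow : (1 + ‖z‖) ^ (a + b - c - 1 / 2) =
      (1 + ‖z‖) ^ (a - 1 / 2) * (1 + ‖z‖) ^ (b - 1) / (1 + ‖z‖) ^ (c - 1) := by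
    rw [← Real.rpow_add hz0, ← Real.rpow_sub hz0]
    ring_nf
  rw [mul_mul_mul_comm, norm_Gamma_mul_Gamma_div_two, hpow]
  field_simp

end GammaSector

theorem stmt15 (a b c : ℝ) (ha : 0 < a) (hb : 0 < b) (hc : 0 < c)
    (δ : ℝ) (hδ : 0 < δ) (hδπ : δ < Real.pi) :
    ∃ C₁ C₂ : ℝ, 0 < C₁ ∧ 0 < C₂ ∧
      ∀ z : ℂ, z ≠ 0 → |Complex.arg z| ≤ Real.pi - δ →
        C₁ * (2 : ℝ) ^ (-z.re) * (1 + ‖z‖) ^ (a + b - c - 1 / 2) ≤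
          ‖Complex.Gamma (a + z / 2) * Complex.Gamma (b + z / 2) / Complex.Gamma (c + z)‖ ∧
        ‖Complex.Gamma (a + z / 2) * Complex.Gamma (b + z / 2) / Complex.Gamma (c + z)‖ ≤
          C₂ * (2 : ℝ) ^ (-z.re) * (1 + ‖z‖) ^ (a + b - c - 1 / 2) := by
  obtain ⟨C₁, C₂, hC₁, hC₂, hbounds⟩ := exists_pos_mul_norm_le_of_isTheta_principal
    (isTheta_Gamma_mul_Gamma_div_Gamma_sector ha hb hc hδ hδπ)
  refine ⟨C₁, C₂, hC₁, hC₂, fun z _ hz => ?_⟩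
  have hnonneg : 0 ≤ (2 : ℝ) ^ (-z.re) * (1 + ‖z‖) ^ (a + b - c - 1 / 2) := by positivity
  simpa only [Real.norm_of_nonneg hnonneg, mul_assoc] using hbounds z hz
end
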